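/- arXiv:2308.05066 — 2 statements merged into one kernel-verified Lean document; each statement's English description precedes it below -/
import Mathlib

section
/- Let k be a field of characteristic 0 and B a ℤ-graded normal affine k-domain. Then: (a) NR(B) = ⋃_{d ∈ M(B)} { d, 2d, 3d, … }; (b) every element d of M(B) divides ē(B) and satisfies d ⊘ e(B) = d. -/
noncomputable section

/-- A derivation is locally nilpotent. -/
def IsLND {R : Type*} [CommRing R] (D : Derivation ℤ R R) : Prop :=
  ∀ b : R, ∃ n : ℕ, 0 < n ∧ (⇑D)^[n] b = 0

/-- Kernel of a derivation, as a subring. -/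
def kerDer {R : Type*} [CommRing R] (D : Derivation ℤ R R) : Subring R where
  carrier := {x | D x = 0}
  one_mem' := by simp
  mul_mem' := by
    intro a b ha hb
    simp only [Set.mem_setOf_eq] at *
    rw [Derivation.leibniz, ha, hb]
    simp
  add_mem' := by
    intro a b ha hb
    simp only [Set.mem_setOf_eq] at *
    rw [map_add, ha, hb, add_zero]
  zero_mem' := by simp
  neg_mem' := by
    intro a ha
    simp only [Set.mem_setOf_eq] at *
    rw [map_neg, ha, neg_zero]

section Graded

variable {G : Type*} [AddCommGroup G] {B : Type*} [CommRing B]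

/-- The Veronese subring `B^{(H)} = ⊕_{i ∈ H} B_i` of a `G`-graded ring,
realized as the subring generated by the homogeneous elements whose degree lies in `H`. -/
def verSub (𝒜 : G → AddSubgroup B) (H : AddSubgroup G) : Subring B :=
  Subring.closure (⋃ i ∈ (H : Set G), (𝒜 i : Set B))

/-- 𝔾(B): the subgroup of G generated by the degrees of nonzero homogeneous elements. -/
def Gsub (𝒜 : G → AddSubgroup B) : AddSubgroup G :=
  AddSubgroup.closure { i : G | 𝒜 i ≠ ⊥ }

/-- `H ∈ 𝕋(B)`: the quotient `𝔾(B)/(H ∩ 𝔾(B))` is torsion. -/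
def Tmem (𝒜 : G → AddSubgroup B) (H : AddSubgroup G) : Prop :=
  ∀ g ∈ Gsub 𝒜, ∃ n : ℕ, 0 < n ∧ n • g ∈ H

/-- A homogeneous derivation of `B`. -/
def IsHomogDer (𝒜 : G → AddSubgroup B) (D : Derivation ℤ B B) : Prop :=
  ∃ d : G, ∀ (i : G) (x : B), x ∈ 𝒜 i → D x ∈ 𝒜 (i + d)

/-- A homogeneous derivation of a graded subring `S` of `B`. -/
def IsHomogDerOn (𝒜 : G → AddSubgroup B) (S : Subring B) (D : Derivation ℤ S S) : Prop :=
  ∃ d : G, ∀ (i : G) (x : S), (x : B) ∈ 𝒜 i → ((D x : S) : B) ∈ 𝒜 (i + d)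

/-- 𝕄̄(B,p): the subgroup of G generated by the degrees i with B_i ⊄ p. -/
def Mbar (𝒜 : G → AddSubgroup B) (p : Ideal B) : AddSubgroup G :=
  AddSubgroup.closure { i : G | ¬ (𝒜 i : Set B) ⊆ (p : Set B) }

/-- A prime ideal of height 1. -/
def heightOne {R : Type*} [CommRing R] (p : Ideal R) : Prop :=
  p.IsPrime ∧ (∃ q : Ideal R, q.IsPrime ∧ q < p) ∧
    ∀ q r : Ideal R, q.IsPrime → r.IsPrime → q < r → r < p → False

open Classical in
/-- 𝔾̄(B). -/
def Gbar (𝒜 : G → AddSubgroup B) : AddSubgroup G :=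
  if ∃ p : Ideal B, heightOne p then ⨅ p : {p : Ideal B // heightOne p}, Mbar 𝒜 p.1
  else Gsub 𝒜

end Graded

/-- The nonnegative generator of a subgroup of ℤ (so that the gcd of a set of integers
is `groupGen` of the subgroup it generates, and the lcm of a set of integers is
`groupGen` of the intersection of the subgroups the elements generate). -/
noncomputable def groupGen (H : AddSubgroup ℤ) : ℕ :=
  (Submodule.IsPrincipal.generator (AddSubgroup.toIntSubmodule H : Ideal ℤ)).natAbs

section ZGraded

variable {B : Type*} [CommRing B]

/-- The set of height-1 homogeneous prime ideals of a ℤ-graded ring. -/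
def homogHt1 (𝒜 : ℤ → AddSubgroup B) : Set (Ideal B) :=
  { p | heightOne p ∧ p = Ideal.span { x : B | x ∈ p ∧ ∃ i : ℤ, x ∈ 𝒜 i } }

/-- The saturation index e(B) = gcd{ n : B_n ≠ 0 } of a ℤ-graded ring. -/
noncomputable def eB (𝒜 : ℤ → AddSubgroup B) : ℕ :=
  groupGen (Gsub 𝒜)

open Classical in
/-- The codimension-1 saturation index ē(B) = lcm{ e(B/p) : p ∈ Z } (Z the set of
height-1 homogeneous primes) if Z ≠ ∅, and ē(B) = e(B) if Z = ∅.  Here e(B/p) is the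
gcd of { n : (B/p)_n ≠ 0 } = { n : B_n ⊄ p }, so that e(B/p)ℤ = 𝕄̄(B,p) and the lcm
corresponds to the intersection of the subgroups 𝕄̄(B,p). -/
noncomputable def ebarB (𝒜 : ℤ → AddSubgroup B) : ℕ :=
  if (homogHt1 𝒜).Nonempty then groupGen (⨅ p : homogHt1 𝒜, Mbar 𝒜 p.1) else eB 𝒜

end ZGraded


section ZGraded2

variable {B : Type*} [CommRing B]

/-- The d-th Veronese subring B^{(d)} of a ℤ-graded ring. -/
def verZ (𝒜 : ℤ → AddSubgroup B) (d : ℕ) : Subring B :=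
  verSub 𝒜 (AddSubgroup.zmultiples (d : ℤ))

/-- NR(B): the set of d ≥ 1 such that B^{(d)} is non-rigid. -/
def NRset (𝒜 : ℤ → AddSubgroup B) : Set ℕ :=
  { d | 1 ≤ d ∧ ∃ D : Derivation ℤ (verZ 𝒜 d) (verZ 𝒜 d), IsLND D ∧ D ≠ 0 }

/-- M(B): the maximal elements of NR(B) for the order d₁ ≼ d₂ ⟺ d₂ ∣ d₁. -/
def MsetZ (𝒜 : ℤ → AddSubgroup B) : Set ℕ :=
  { d | d ∈ NRset 𝒜 ∧ ∀ e ∈ NRset 𝒜, e ∣ d → e = d }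

end ZGraded2

/-- m ⊘ n = ∏_{p prime, v_p(m) > v_p(n)} p^{v_p(m)}, with v_p(0) = ∞ (so m ⊘ 0 = 1). -/
def odiv (m n : ℕ) : ℕ :=
  if n = 0 then 1
  else ∏ p ∈ m.primeFactors,
    if n.factorization p < m.factorization p then p ^ m.factorization p else 1


namespace NRproof
set_option linter.unusedSectionVars false

section GradedBasics
variable {B : Type*} [CommRing B] (𝒜 : ℤ → AddSubgroup B) [GradedRing 𝒜]

theorem proj_of_mem {i : ℤ} {x : B} (hx : x ∈ 𝒜 i) : GradedRing.proj 𝒜 i x = x := by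
  rw [GradedRing.proj_apply, DirectSum.decompose_of_mem_same 𝒜 hx]

theorem proj_of_mem_ne {i j : ℤ} {x : B} (hx : x ∈ 𝒜 i) (h : i ≠ j) :
    GradedRing.proj 𝒜 j x = 0 := by
  rw [GradedRing.proj_apply, DirectSum.decompose_of_mem_ne 𝒜 hx h]

theorem proj_mem (i : ℤ) (x : B) : GradedRing.proj 𝒜 i x ∈ 𝒜 i := by
  rw [GradedRing.proj_apply]; exact SetLike.coe_mem _

theorem proj_mul_left {i : ℤ} {x : B} (hx : x ∈ 𝒜 i) (y : B) (j : ℤ) :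
    GradedRing.proj 𝒜 (i + j) (x * y) = x * GradedRing.proj 𝒜 j y := by
  simp only [GradedRing.proj_apply]
  exact DirectSum.coe_decompose_mul_add_of_left_mem 𝒜 hx

theorem exists_sum (x : B) : ∃ s : Finset ℤ, x = ∑ i ∈ s, GradedRing.proj 𝒜 i x := by
  classical
  exact ⟨(DirectSum.decompose 𝒜 x).support, (DirectSum.sum_support_decompose 𝒜 x).symm⟩

theorem proj_finite (x : B) : ∃ s : Finset ℤ, ∀ i ∉ s, GradedRing.proj 𝒜 i x = 0 := by
  classical
  refine ⟨(DirectSum.decompose 𝒜 x).support, fun i hi => ?_⟩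
  rw [GradedRing.proj_apply]
  simpa [DFinsupp.mem_support_toFun] using hi

theorem proj_ext {x y : B} (h : ∀ i, GradedRing.proj 𝒜 i x = GradedRing.proj 𝒜 i y) : x = y := by
  apply (DirectSum.decompose 𝒜).injective
  ext i
  simpa [GradedRing.proj_apply] using h i

theorem mem_of_proj {x : B} {i : ℤ} (h : ∀ j, j ≠ i → GradedRing.proj 𝒜 j x = 0) : x ∈ 𝒜 i := by
  have : x = GradedRing.proj 𝒜 i x := by
    apply proj_ext 𝒜
    intro j
    by_cases hj : j = i
    · subst hj; rw [proj_of_mem 𝒜 (proj_mem 𝒜 j x)]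
    · rw [h j hj, proj_of_mem_ne 𝒜 (proj_mem 𝒜 i x) (Ne.symm hj)]
  rw [this]; exact proj_mem 𝒜 i x

theorem mem_of_mul_mem [IsDomain B] {i j : ℤ} {u z : B} (hu : u ∈ 𝒜 i) (hu0 : u ≠ 0)
    (h : u * z ∈ 𝒜 (i + j)) : z ∈ 𝒜 j := by
  apply mem_of_proj
  intro l hl
  have h1 := proj_mul_left 𝒜 hu z l
  rw [proj_of_mem_ne 𝒜 h (by omega)] at h1
  exact (mul_eq_zero.mp h1.symm).resolve_left hu0

theorem mul_mem' {i j : ℤ} {x y : B} (hx : x ∈ 𝒜 i) (hy : y ∈ 𝒜 j) : x * y ∈ 𝒜 (i + j) :=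
  SetLike.GradedMul.mul_mem hx hy

theorem pow_mem' {i : ℤ} {x : B} (hx : x ∈ 𝒜 i) (n : ℕ) : x ^ n ∈ 𝒜 (n * i) := by
  have := SetLike.pow_mem_graded n hx
  simpa using this

theorem one_mem' : (1 : B) ∈ 𝒜 0 := SetLike.GradedOne.one_mem

theorem natCast_mem' (n : ℕ) : (n : B) ∈ 𝒜 0 := SetLike.natCast_mem_graded 𝒜 n

theorem mem_cast {i j : ℤ} {x : B} (h : x ∈ 𝒜 i) (e : i = j) : x ∈ 𝒜 j := e ▸ h

theorem exists_lead {ε : ℤ} {x : B} (hε : ε = 1 ∨ ε = -1) (hx : x ≠ 0) :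
    ∃ t, GradedRing.proj 𝒜 t x ≠ 0 ∧ ∀ i, ε * t < ε * i → GradedRing.proj 𝒜 i x = 0 := by
  classical
  have hne : ((DirectSum.decompose 𝒜 x).support).Nonempty := by
    rw [Finset.nonempty_iff_ne_empty]
    intro h
    apply hx
    rw [DFinsupp.support_eq_empty] at h
    exact (DirectSum.decompose 𝒜).injective (h.trans (DirectSum.decompose_zero 𝒜).symm)
  obtain ⟨t, ht, hmax⟩ := Finset.exists_max_image _ (fun i => ε * i) hne
  refine ⟨t, ?_, ?_⟩
  · rw [GradedRing.proj_apply]; simpa using ht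
  · intro i hi
    by_contra hc
    rw [GradedRing.proj_apply] at hc
    have := hmax i (by simpa using hc)
    omega

theorem lead_mul [IsDomain B] {ε : ℤ} (hε : ε = 1 ∨ ε = -1) {x y : B} {t u : ℤ}
    (ht : ∀ i, ε * t < ε * i → GradedRing.proj 𝒜 i x = 0)
    (hu : ∀ i, ε * u < ε * i → GradedRing.proj 𝒜 i y = 0) :
    GradedRing.proj 𝒜 (t + u) (x * y) = GradedRing.proj 𝒜 t x * GradedRing.proj 𝒜 u y := by
  classical
  simp only [GradedRing.proj_apply] at *
  rw [DirectSum.decompose_mul, DirectSum.coe_mul_apply]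
  rw [Finset.sum_eq_single (t, u)]
  · rintro ⟨i, j⟩ hij hne
    simp only [Finset.mem_filter, Finset.mem_product, DFinsupp.mem_support_toFun] at hij
    obtain ⟨⟨hi, hj⟩, hs⟩ := hij
    by_cases h : ε * t < ε * i
    · simp [ht i h]
    · by_cases h' : ε * u < ε * j
      · simp [hu j h']
      · exfalso; apply hne
        rcases hε with rfl | rfl <;> ext <;> simp <;> omega
  · intro h
    simp only [Finset.mem_filter, Finset.mem_product, DFinsupp.mem_support_toFun, and_true] at h
    by_cases h1 : DirectSum.decompose 𝒜 x t = 0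
    · simp [h1]
    · have : DirectSum.decompose 𝒜 y u = 0 := by tauto
      simp [this]

theorem unit_homog [IsDomain B] {x y : B} (h : x * y = 1) : ∃ t, x ∈ 𝒜 t := by
  have hx : x ≠ 0 := left_ne_zero_of_mul_eq_one h
  have hy : y ≠ 0 := right_ne_zero_of_mul_eq_one h
  have key : ∀ ε : ℤ, (ε = 1 ∨ ε = -1) → ∃ t u, t + u = 0 ∧ GradedRing.proj 𝒜 t x ≠ 0 ∧
      GradedRing.proj 𝒜 u y ≠ 0 ∧
      (∀ i, ε * t < ε * i → GradedRing.proj 𝒜 i x = 0) ∧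
      (∀ i, ε * u < ε * i → GradedRing.proj 𝒜 i y = 0) := by
    intro ε hε
    obtain ⟨t, ht, ht'⟩ := exists_lead 𝒜 hε hx
    obtain ⟨u, hu, hu'⟩ := exists_lead 𝒜 hε hy
    refine ⟨t, u, ?_, ht, hu, ht', hu'⟩
    have := lead_mul 𝒜 hε ht' hu'
    rw [h] at this
    by_contra hc
    rw [proj_of_mem_ne 𝒜 (one_mem' 𝒜) (Ne.symm hc)] at this
    exact mul_ne_zero ht hu this.symm
  obtain ⟨t, u, e, ht, hu, ht', hu'⟩ := key 1 (Or.inl rfl)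
  obtain ⟨t1, u1, e1, ht1, hu1, ht1', hu1'⟩ := key (-1) (Or.inr rfl)
  have a1 : ¬ (1 * t < 1 * t1) := fun h => ht1 (ht' _ h)
  have a2 : ¬ (1 * u < 1 * u1) := fun h => hu1 (hu' _ h)
  have : t1 = t := by omega
  subst this
  refine ⟨t1, mem_of_proj 𝒜 fun j hj => ?_⟩
  rcases lt_or_gt_of_ne hj with h | h
  · exact ht1' _ (by omega)
  · exact ht' _ (by omega)

theorem field_mem_zero [IsDomain B] {k : Type*} [Field k] [Algebra k B] (c : k) :
    algebraMap k B c ∈ 𝒜 0 := by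
  have hu : ∀ c : k, c ≠ 0 → ∃ t, algebraMap k B c ∈ 𝒜 t := fun c hc =>
    unit_homog 𝒜 (y := algebraMap k B c⁻¹) (by rw [← map_mul, mul_inv_cancel₀ hc, map_one])
  by_cases hc : c = 0
  · subst hc; simp
  by_cases hc1 : c + 1 = 0
  · have : c = -1 := by linear_combination hc1
    subst this; simpa using one_mem' 𝒜
  obtain ⟨t, ht⟩ := hu c hc
  obtain ⟨u, hu⟩ := hu (c + 1) hc1
  by_cases h : t = 0
  · exact h ▸ ht
  exfalso
  have e : algebraMap k B (c + 1) = algebraMap k B c + 1 := by simp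
  have hc' : algebraMap k B c ≠ 0 := by simpa using hc
  have p0 := congrArg (GradedRing.proj 𝒜 0) e
  rw [map_add (GradedRing.proj 𝒜 0) (algebraMap k B c) 1, proj_of_mem_ne 𝒜 ht h, proj_of_mem 𝒜 (one_mem' 𝒜)] at p0
  have pt := congrArg (GradedRing.proj 𝒜 t) e
  rw [map_add (GradedRing.proj 𝒜 t) (algebraMap k B c) 1, proj_of_mem 𝒜 ht, proj_of_mem_ne 𝒜 (one_mem' 𝒜) (Ne.symm h)] at pt
  by_cases hu0 : u = 0
  · subst hu0
    rw [proj_of_mem_ne 𝒜 hu (Ne.symm h)] at pt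
    apply hc'; simpa using pt.symm
  · rw [proj_of_mem_ne 𝒜 hu hu0] at p0
    simp at p0

/-! Veronese subring -/

theorem mem_verZ_of_mem {d : ℕ} {i : ℤ} (hi : (d : ℤ) ∣ i) {x : B} (hx : x ∈ 𝒜 i) :
    x ∈ verZ 𝒜 d := by
  apply Subring.subset_closure
  simp only [Set.mem_iUnion]
  exact ⟨i, Int.mem_zmultiples_iff.mpr hi, hx⟩

theorem verZ_ind {d : ℕ} {p : B → Prop} (h0 : p 0) (hadd : ∀ x y, p x → p y → p (x + y))
    (hom : ∀ i : ℤ, (d : ℤ) ∣ i → ∀ x ∈ 𝒜 i, p x) {x : B} (hx : x ∈ verZ 𝒜 d) : p x := by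
  have key : ∀ n : ℤ, ¬ (d : ℤ) ∣ n → GradedRing.proj 𝒜 n x = 0 := by
    induction hx using Subring.closure_induction with
    | mem x hx =>
      intro n hn
      simp only [Set.mem_iUnion] at hx
      obtain ⟨i, hi, hx⟩ := hx
      exact proj_of_mem_ne 𝒜 hx (fun h => hn (h ▸ Int.mem_zmultiples_iff.mp hi))
    | zero => simp
    | one => exact fun n hn => proj_of_mem_ne 𝒜 (one_mem' 𝒜) (fun h => hn (h ▸ dvd_zero _))
    | add x y _ _ hx hy => intro n hn; rw [map_add, hx n hn, hy n hn, add_zero]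
    | neg x _ hx => intro n hn; rw [map_neg, hx n hn, neg_zero]
    | mul x y _ _ hx hy =>
      intro n hn
      obtain ⟨s, hs⟩ := exists_sum 𝒜 x
      rw [hs, Finset.sum_mul, map_sum]
      apply Finset.sum_eq_zero
      intro i _
      by_cases hi : (d : ℤ) ∣ i
      · have := proj_mul_left 𝒜 (proj_mem 𝒜 i x) y (n - i)
        rw [add_sub_cancel] at this
        rw [this, hy, mul_zero]
        intro h; apply hn; have := dvd_add h hi; simpa using this
      · rw [hx i hi]; simp
  obtain ⟨s, hs⟩ := exists_sum 𝒜 x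
  rw [hs]
  apply Finset.sum_induction _ p hadd h0
  intro i _
  by_cases hi : (d : ℤ) ∣ i
  · exact hom i hi _ (proj_mem 𝒜 i x)
  · rw [key i hi]; exact h0

theorem verZ_proj {d : ℕ} {x : B} (hx : x ∈ verZ 𝒜 d) {n : ℤ} (hn : ¬ (d : ℤ) ∣ n) :
    GradedRing.proj 𝒜 n x = 0 := by
  refine verZ_ind 𝒜 (p := fun x => GradedRing.proj 𝒜 n x = 0) ?_ ?_ ?_ hx
  · simp
  · intro x y hx hy; rw [map_add, hx, hy, add_zero]
  · intro i hi x hx; exact proj_of_mem_ne 𝒜 hx (fun h => hn (h ▸ hi))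

theorem verZ_proj_mem {d : ℕ} {x : B} (hx : x ∈ verZ 𝒜 d) (n : ℤ) :
    GradedRing.proj 𝒜 n x ∈ verZ 𝒜 d := by
  by_cases hn : (d : ℤ) ∣ n
  · exact mem_verZ_of_mem 𝒜 hn (proj_mem 𝒜 n x)
  · rw [verZ_proj 𝒜 hx hn]; exact zero_mem _

theorem verZ_mono {d e : ℕ} (h : d ∣ e) : verZ 𝒜 e ≤ verZ 𝒜 d := by
  intro x hx
  refine verZ_ind 𝒜 (p := fun x => x ∈ verZ 𝒜 d) ?_ ?_ ?_ hx
  · exact zero_mem _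
  · intro x y hx hy; exact add_mem hx hy
  · intro i hi x hx; exact mem_verZ_of_mem 𝒜 ((Int.natCast_dvd_natCast.mpr h).trans hi) hx

end GradedBasics
end NRproof

namespace NRproof
set_option linter.unusedSectionVars false

section Deg
variable {K : Type*} [Field K] [CharZero K] (D : Derivation ℤ K K)

/-- `x` has `D`-degree `n`. -/
def HasDeg (x : K) (n : ℕ) : Prop := D^[n] x ≠ 0 ∧ D^[n + 1] x = 0

variable {D}

theorem iter_add (n : ℕ) (x y : K) : D^[n] (x + y) = D^[n] x + D^[n] y := by
  induction n generalizing x y with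
  | zero => rfl
  | succ n ih => simp only [Function.iterate_succ_apply, map_add, ih]

theorem iter_zero (n : ℕ) : D^[n] (0 : K) = 0 := by
  induction n with
  | zero => rfl
  | succ n ih => simp only [Function.iterate_succ_apply, map_zero, ih]

theorem iter_neg (n : ℕ) (x : K) : D^[n] (-x) = - D^[n] x := by
  induction n generalizing x with
  | zero => rfl
  | succ n ih => simp only [Function.iterate_succ_apply, map_neg, ih]

theorem iter_const_mul {a : K} (ha : D a = 0) (n : ℕ) (x : K) : D^[n] (a * x) = a * D^[n] x := by
  induction n generalizing x with
  | zero => rfl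
  | succ n ih => simp only [Function.iterate_succ_apply, Derivation.leibniz, ha, smul_eq_mul,
      mul_zero, add_zero, ih]

theorem iter_ge {n m : ℕ} {x : K} (h : D^[n] x = 0) (hm : n ≤ m) : D^[m] x = 0 := by
  obtain ⟨j, rfl⟩ := Nat.exists_eq_add_of_le hm
  rw [add_comm, Function.iterate_add_apply, h, iter_zero]

theorem iter_mul (N : ℕ) : ∀ (m n : ℕ) (x y : K), m + n = N → D^[m + 1] x = 0 → D^[n + 1] y = 0 →
    D^[N] (x * y) = (N.choose m : K) * (D^[m] x * D^[n] y) := by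
  induction N with
  | zero =>
    intro m n x y h hx hy
    obtain ⟨rfl, rfl⟩ : m = 0 ∧ n = 0 := by omega
    simp
  | succ N ih =>
    intro m n x y h hx hy
    rw [Function.iterate_succ_apply, Derivation.leibniz, iter_add, smul_eq_mul, smul_eq_mul]
    rcases m with _ | m
    · have hx' : D x = 0 := by simpa using hx
      rw [hx', mul_zero, iter_zero, add_zero, iter_const_mul hx']
      obtain rfl : n = N + 1 := by omega
      rw [← Function.iterate_succ_apply]; simp
    · rcases n with _ | n
      · have hy' : D y = 0 := by simpa using hy
        rw [hy', mul_zero, iter_zero, zero_add, iter_const_mul hy']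
        obtain rfl : m = N := by omega
        rw [← Function.iterate_succ_apply]; simp [mul_comm]
      · rw [ih (m + 1) n x (D y) (by omega) hx (by rw [← Function.iterate_succ_apply]; exact hy),
          mul_comm y, ih m (n + 1) (D x) y (by omega)
            (by rw [← Function.iterate_succ_apply]; exact hx) hy,
          ← Function.iterate_succ_apply, ← Function.iterate_succ_apply,
          Nat.choose_succ_succ]
        push_cast
        ring

theorem HasDeg.ne {x : K} {n : ℕ} (h : HasDeg D x n) : x ≠ 0 := by
  rintro rfl; exact h.1 (iter_zero n)

theorem HasDeg.mul {x y : K} {m n : ℕ} (hx : HasDeg D x m) (hy : HasDeg D y n) :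
    HasDeg D (x * y) (m + n) := by
  constructor
  · rw [iter_mul (m + n) m n x y rfl hx.2 hy.2]
    refine mul_ne_zero ?_ (mul_ne_zero hx.1 hy.1)
    exact_mod_cast (Nat.choose_pos (Nat.le_add_right m n)).ne'
  · rw [iter_mul (m + n + 1) (m + 1) n x y (by omega) (iter_ge hx.2 (by omega)) hy.2, hx.2]
    simp

theorem HasDeg.unique {x : K} {m n : ℕ} (hm : HasDeg D x m) (hn : HasDeg D x n) : m = n := by
  rcases lt_trichotomy m n with h | h | h
  · exact absurd (iter_ge hm.2 (by omega)) hn.1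
  · exact h
  · exact absurd (iter_ge hn.2 (by omega)) hm.1

theorem hasDeg_one : HasDeg D (1 : K) 0 := by
  constructor <;> simp

theorem hasDeg_const {a : K} (h0 : a ≠ 0) (ha : D a = 0) : HasDeg D a 0 := by
  constructor <;> simpa

theorem HasDeg.pow {x : K} {m : ℕ} (hx : HasDeg D x m) (n : ℕ) : HasDeg D (x ^ n) (n * m) := by
  induction n with
  | zero => simpa using hasDeg_one
  | succ n ih => rw [pow_succ, Nat.succ_mul]; exact ih.mul hx

theorem exists_hasDeg {x : K} (hx : x ≠ 0) {n : ℕ} (h : D^[n] x = 0) :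
    ∃ m, m < n ∧ HasDeg D x m := by
  induction n with
  | zero => exact absurd h hx
  | succ n ih =>
    by_cases h' : D^[n] x = 0
    · obtain ⟨m, hm, hd⟩ := ih h'
      exact ⟨m, by omega, hd⟩
    · exact ⟨n, by omega, h', h⟩

theorem HasDeg.deriv {x : K} {n : ℕ} (h : HasDeg D x (n + 1)) : HasDeg D (D x) n := by
  constructor
  · rw [← Function.iterate_succ_apply]; exact h.1
  · rw [← Function.iterate_succ_apply]; exact h.2

theorem HasDeg.of_deriv {x : K} {n : ℕ} (h : HasDeg D (D x) n) : HasDeg D x (n + 1) := by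
  constructor
  · rw [Function.iterate_succ_apply]; exact h.1
  · rw [Function.iterate_succ_apply]; exact h.2

theorem HasDeg.deriv_eq_zero {x : K} (h : HasDeg D x 0) : D x = 0 := by simpa using h.2

theorem deriv_unit {x y : K} (h : x * y = 1) {m n : ℕ} (hx : D^[m] x = 0) (hy : D^[n] y = 0) :
    D x = 0 := by
  obtain ⟨i, -, hi⟩ := exists_hasDeg (left_ne_zero_of_mul_eq_one h) hx
  obtain ⟨j, -, hj⟩ := exists_hasDeg (right_ne_zero_of_mul_eq_one h) hy
  have := hi.mul hj
  rw [h] at this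
  have := this.unique hasDeg_one
  obtain rfl : i = 0 := by omega
  exact hi.deriv_eq_zero

end Deg
end NRproof

namespace NRproof
set_option linter.unusedSectionVars false

section Fin
variable {B : Type*} [CommRing B] [IsDomain B] (𝒜 : ℤ → AddSubgroup B) [GradedRing 𝒜]

theorem integral_verZ {d : ℕ} (hd : 1 ≤ d) : Algebra.IsIntegral (verZ 𝒜 d) B := by
  constructor
  intro x
  obtain ⟨s, hs⟩ := exists_sum 𝒜 x
  rw [hs]
  apply IsIntegral.sum
  intro i _
  have h : (GradedRing.proj 𝒜 i x) ^ d ∈ verZ 𝒜 d :=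
    mem_verZ_of_mem 𝒜 (dvd_mul_right _ _) (pow_mem' 𝒜 (proj_mem 𝒜 i x) d)
  apply IsIntegral.of_pow (n := d) (by omega)
  exact isIntegral_algebraMap (R := verZ 𝒜 d) (x := ⟨_, h⟩)

/-- The Veronese subring as a `k`-subalgebra. -/
def verAlg (k : Type*) [Field k] [Algebra k B] (d : ℕ) : Subalgebra k B :=
  { verZ 𝒜 d with
    algebraMap_mem' := fun c => mem_verZ_of_mem 𝒜 (dvd_zero _) (field_mem_zero 𝒜 c) }

theorem fg_uniform (k : Type*) [Field k] [Algebra k B] [Algebra.FiniteType k B] {d : ℕ}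
    (hd : 1 ≤ d) (Q : ℕ → Subalgebra k B) (hmono : Monotone Q)
    (h : ∀ x ∈ verZ 𝒜 d, ∃ N, x ∈ Q N) : ∃ N, ∀ x ∈ verZ 𝒜 d, x ∈ Q N := by
  have : Algebra.IsIntegral (verAlg 𝒜 k d) B := by
    have := integral_verZ 𝒜 hd
    exact this
  have : Algebra.FiniteType (verAlg 𝒜 k d) B := Algebra.FiniteType.of_restrictScalars_finiteType k _ _
  have hfin : Module.Finite (verAlg 𝒜 k d) B := Algebra.IsIntegral.finite
  have hfg : (⊤ : Subalgebra k (verAlg 𝒜 k d)).FG :=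
    fg_of_fg_of_fg k (verAlg 𝒜 k d) B Algebra.FiniteType.out hfin.1 Subtype.val_injective
  obtain ⟨t, ht⟩ := (Subalgebra.fg_top _).mp hfg
  have ht' : ∀ x ∈ t, x ∈ verZ 𝒜 d := by
    intro x hx
    have : x ∈ verAlg 𝒜 k d := by rw [← ht]; exact Algebra.subset_adjoin hx
    exact this
  choose! N hN using h
  refine ⟨t.sup N, fun x hx => ?_⟩
  have hx' : x ∈ Algebra.adjoin k (t : Set B) := by rw [ht]; exact hx
  refine Algebra.adjoin_le ?_ hx'
  intro y hy
  exact hmono (Finset.le_sup hy) (hN y (ht' y hy))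

end Fin

section Ext

theorem etale_ext (R S K : Type*) [CommRing R] [CommRing S] [CommRing K] [Algebra R S] [Algebra R K]
    [Algebra S K] [IsScalarTower R S K] [Algebra.FormallyEtale S K] (D : Derivation R S K) :
    ∃ E : Derivation R K K, ∀ x : S, E (algebraMap S K x) = D x := by
  let φ : Ω[K⁄R] →ₗ[K] K :=
    (D.liftKaehlerDifferential.liftBaseChange K) ∘ₗ
      (KaehlerDifferential.tensorKaehlerEquivOfFormallyEtale R S K).symm.toLinearMap
  refine ⟨φ.compDer (KaehlerDifferential.D R K), fun x => ?_⟩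
  have := KaehlerDifferential.tensorKaehlerEquivOfFormallyEtale_symm_D_algebraMap R S K x
  change φ (KaehlerDifferential.D R K (algebraMap S K x)) = D x
  simp only [φ, LinearMap.comp_apply, LinearEquiv.coe_coe]
  rw [this]
  simp

variable {B : Type*} [CommRing B] [IsDomain B] [CharZero B]
  (𝒜 : ℤ → AddSubgroup B) [GradedRing 𝒜] {K : Type*} [Field K] [Algebra B K] [IsFractionRing B K]

theorem extend_der {d : ℕ} (hd : 1 ≤ d)
    (D : Derivation ℤ (verZ 𝒜 d) K) :
    ∃ E : Derivation ℤ K K,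
      ∀ x : verZ 𝒜 d, E (algebraMap B K x) = D x := by
  let S := verZ 𝒜 d
  have hIntegral : Algebra.IsIntegral S B := integral_verZ 𝒜 hd
  have hinj : Function.Injective (algebraMap S K) := by
    rw [IsScalarTower.algebraMap_eq S B K]
    exact (IsFractionRing.injective B K).comp Subtype.val_injective
  have : FaithfulSMul S K := (faithfulSMul_iff_algebraMap_injective S K).mpr hinj
  let F := FractionRing S
  let _ : Algebra F K := FractionRing.liftAlgebra S K
  have : IsScalarTower S F K := inferInstance
  have hSB : Algebra.IsAlgebraic S B := inferInstance
  have hSK : Algebra.IsAlgebraic S K := (IsFractionRing.isAlgebraic_iff' S B K).mp hSB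
  have hFK : Algebra.IsAlgebraic F K :=
    (IsFractionRing.comap_isAlgebraic_iff (A := S) (K := F) (C := K)).mp hSK
  have : CharZero F := inferInstance
  have e1 : Algebra.FormallyEtale S F := Algebra.FormallyEtale.of_isLocalization (nonZeroDivisors S)
  have e2 : Algebra.FormallyEtale F K := Algebra.FormallyEtale.of_isSeparable _ _
  have e3 : Algebra.FormallyEtale S K := Algebra.FormallyEtale.comp S F K
  exact etale_ext ℤ S K D

end Ext
end NRproof

namespace NRproof
set_option linter.unusedSectionVars false

section HLsec
variable {B : Type*} [CommRing B] [IsDomain B] [CharZero B]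
  (𝒜 : ℤ → AddSubgroup B) [GradedRing 𝒜] {K : Type*} [Field K] [CharZero K] [Algebra B K] [IsFractionRing B K]

/-- A derivation of `K = Frac B` which restricts to a nonzero homogeneous locally nilpotent
derivation of degree `δ` of `B^{(d)}`. -/
structure HL (d : ℕ) (δ : ℤ) (D : Derivation ℤ K K) : Prop where
  dvd : (d : ℤ) ∣ δ
  map : ∀ i : ℤ, (d : ℤ) ∣ i → ∀ x ∈ 𝒜 i, ∃ y ∈ 𝒜 (i + δ), D (algebraMap B K x) = algebraMap B K y
  nil : ∀ i : ℤ, (d : ℤ) ∣ i → ∀ x ∈ 𝒜 i, ∃ n, D^[n] (algebraMap B K x) = 0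
  nz : ∃ i : ℤ, (d : ℤ) ∣ i ∧ ∃ x ∈ 𝒜 i, D (algebraMap B K x) ≠ 0

variable {𝒜}

theorem HL.map_verZ {d : ℕ} {δ : ℤ} {D : Derivation ℤ K K} (h : HL 𝒜 d δ D) {x : B}
    (hx : x ∈ verZ 𝒜 d) : ∃ y ∈ verZ 𝒜 d, D (algebraMap B K x) = algebraMap B K y := by
  refine verZ_ind 𝒜 (p := fun x => ∃ y ∈ verZ 𝒜 d, D (algebraMap B K x) = algebraMap B K y)
    ?_ ?_ ?_ hx
  · exact ⟨0, zero_mem _, by simp⟩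
  · rintro x y ⟨x', hx', ex⟩ ⟨y', hy', ey⟩
    exact ⟨x' + y', add_mem hx' hy', by simp [ex, ey]⟩
  · intro i hi x hx
    obtain ⟨y, hy, e⟩ := h.map i hi x hx
    exact ⟨y, mem_verZ_of_mem 𝒜 (dvd_add hi h.dvd) hy, e⟩

theorem HL.nil_verZ {d : ℕ} {δ : ℤ} {D : Derivation ℤ K K} (h : HL 𝒜 d δ D) {x : B}
    (hx : x ∈ verZ 𝒜 d) : ∃ n, D^[n] (algebraMap B K x) = 0 := by
  refine verZ_ind 𝒜 (p := fun x => ∃ n, D^[n] (algebraMap B K x) = 0) ?_ ?_ ?_ hx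
  · exact ⟨0, by simp⟩
  · rintro x y ⟨m, hm⟩ ⟨n, hn⟩
    refine ⟨max m n, ?_⟩
    rw [map_add, iter_add, iter_ge hm (le_max_left _ _), iter_ge hn (le_max_right _ _), add_zero]
  · exact fun i hi x hx => h.nil i hi x hx

theorem HL.mem_NR {d : ℕ} (hd : 1 ≤ d) {δ : ℤ} {D : Derivation ℤ K K} (h : HL 𝒜 d δ D) :
    d ∈ NRset 𝒜 := by
  have inj : Function.Injective (algebraMap B K) := IsFractionRing.injective B K
  have hm : ∀ x : verZ 𝒜 d, ∃ y : verZ 𝒜 d, D (algebraMap B K x) = algebraMap B K y := by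
    rintro ⟨x, hx⟩
    obtain ⟨y, hy, e⟩ := h.map_verZ hx
    exact ⟨⟨y, hy⟩, e⟩
  choose F hF using hm
  let F1 : verZ 𝒜 d →+ verZ 𝒜 d := AddMonoidHom.mk' F (by
    intro a b
    apply Subtype.ext; apply inj
    rw [← hF]
    rw [Subring.coe_add, map_add, map_add, Subring.coe_add, map_add, hF, hF])
  let E : Derivation ℤ (verZ 𝒜 d) (verZ 𝒜 d) := Derivation.mk' F1.toIntLinearMap (by
    intro a b
    apply Subtype.ext; apply inj
    change algebraMap B K (F (a * b)) = algebraMap B K (a * (F b : B) + b * (F a : B))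
    rw [← hF]
    rw [Subring.coe_mul, map_mul (algebraMap B K), Derivation.leibniz, map_add (algebraMap B K),
      map_mul (algebraMap B K), map_mul (algebraMap B K), ← hF, ← hF]
    rfl)
  have hE : ∀ x, algebraMap B K (E x : verZ 𝒜 d) = D (algebraMap B K x) := fun x => (hF x).symm
  have hEn : ∀ n x, algebraMap B K ((E^[n] x : verZ 𝒜 d) : B) = D^[n] (algebraMap B K x) := by
    intro n
    induction n with
    | zero => intro x; rfl
    | succ n ih => intro x; rw [Function.iterate_succ_apply, Function.iterate_succ_apply, ih, hE]
  refine ⟨hd, E, ?_, ?_⟩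
  · intro b
    obtain ⟨n, hn⟩ := h.nil_verZ b.2
    refine ⟨n + 1, by omega, ?_⟩
    apply Subtype.ext; apply inj
    rw [hEn, iter_ge hn (by omega)]
    simp
  · intro hE0
    obtain ⟨i, hi, x, hx, hne⟩ := h.nz
    apply hne
    have := hE ⟨x, mem_verZ_of_mem 𝒜 hi hx⟩
    rw [hE0] at this
    simpa using this.symm

variable (𝒜) in
theorem exists_sum' (x : B) : ∃ s : Finset ℤ, x = ∑ i ∈ s, GradedRing.proj 𝒜 i x ∧
    ∀ i ∉ s, GradedRing.proj 𝒜 i x = 0 := by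
  classical
  refine ⟨(DirectSum.decompose 𝒜 x).support, (DirectSum.sum_support_decompose 𝒜 x).symm,
    fun i hi => ?_⟩
  rw [GradedRing.proj_apply]
  simpa [DFinsupp.mem_support_toFun] using hi

variable (𝒜) in
/-- The degree `i` component of an additive map. -/
def compFun (G : B →+ B) (i : ℤ) : B →+ B :=
  (DirectSum.toAddMonoid (fun n : ℤ => (GradedRing.proj 𝒜 (n + i)).comp
    (G.comp (𝒜 n).subtype))).comp (DirectSum.decomposeAddEquiv 𝒜).toAddMonoidHom

theorem compFun_hom (G : B →+ B) (i : ℤ) {n : ℤ} {x : B} (hx : x ∈ 𝒜 n) :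
    compFun 𝒜 G i x = GradedRing.proj 𝒜 (n + i) (G x) := by
  simp [compFun, DirectSum.decompose_of_mem 𝒜 hx, DirectSum.toAddMonoid_of]

variable (𝒜) in
/-- Extension of a derivation of the Veronese subring by zero. -/
theorem exists_G {d : ℕ} (D : verZ 𝒜 d →+ verZ 𝒜 d) :
    ∃ G : B →+ B, ∀ x : verZ 𝒜 d, G x = D x := by
  classical
  let G : B →+ B := (DirectSum.toAddMonoid (fun n : ℤ =>
    if h : (d : ℤ) ∣ n then
      (verZ 𝒜 d).subtype.toAddMonoidHom.comp (D.comp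
        (AddMonoidHom.mk' (fun x : 𝒜 n => (⟨x, mem_verZ_of_mem 𝒜 h x.2⟩ : verZ 𝒜 d))
          (fun _ _ => rfl)))
    else 0)).comp (DirectSum.decomposeAddEquiv 𝒜).toAddMonoidHom
  refine ⟨G, ?_⟩
  rintro ⟨x, hx⟩
  have : ∃ h : x ∈ verZ 𝒜 d, G x = D ⟨x, h⟩ := by
    refine verZ_ind 𝒜 (p := fun x => ∃ h : x ∈ verZ 𝒜 d, G x = D ⟨x, h⟩) ?_ ?_ ?_ hx
    · refine ⟨zero_mem _, ?_⟩
      have : (⟨0, zero_mem _⟩ : verZ 𝒜 d) = 0 := rfl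
      rw [map_zero, this, map_zero]; rfl
    · rintro x y ⟨h1, e1⟩ ⟨h2, e2⟩
      refine ⟨add_mem h1 h2, ?_⟩
      have : (⟨x + y, add_mem h1 h2⟩ : verZ 𝒜 d) = ⟨x, h1⟩ + ⟨y, h2⟩ := rfl
      rw [map_add, e1, e2, this, map_add]; rfl
    · intro i hi x hx
      refine ⟨mem_verZ_of_mem 𝒜 hi hx, ?_⟩
      simp [G, DirectSum.decompose_of_mem 𝒜 hx, DirectSum.toAddMonoid_of, hi]
  exact this.2

theorem compFun_leibniz {d : ℕ} {G : B →+ B}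
    (hG : ∀ x ∈ verZ 𝒜 d, ∀ y ∈ verZ 𝒜 d, G (x * y) = x * G y + y * G x) (i : ℤ)
    {x y : B} (hx : x ∈ verZ 𝒜 d) (hy : y ∈ verZ 𝒜 d) :
    compFun 𝒜 G i (x * y) = x * compFun 𝒜 G i y + y * compFun 𝒜 G i x := by
  refine verZ_ind 𝒜 (p := fun x => compFun 𝒜 G i (x * y) = x * compFun 𝒜 G i y + y * compFun 𝒜 G i x)
    ?_ ?_ ?_ hx
  · simp
  · intro a b ha hb
    rw [add_mul, map_add, map_add, ha, hb]; ring
  · intro n hn x hx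
    refine verZ_ind 𝒜 (p := fun y => compFun 𝒜 G i (x * y) =
      x * compFun 𝒜 G i y + y * compFun 𝒜 G i x) ?_ ?_ ?_ hy
    · simp
    · intro a b ha hb
      rw [mul_add, map_add, map_add, ha, hb]; ring
    · intro m hm y hy
      rw [compFun_hom G i (mul_mem' 𝒜 hx hy), compFun_hom G i hx, compFun_hom G i hy,
        hG x (mem_verZ_of_mem 𝒜 hn hx) y (mem_verZ_of_mem 𝒜 hm hy), map_add,
        ← proj_mul_left 𝒜 hx, ← proj_mul_left 𝒜 hy]
      congr 2
      · congr 1; ring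
      · congr 1; ring

theorem exists_bound_compFun (G : B →+ B) (x : B) :
    ∃ L : ℕ, ∀ i : ℤ, (L : ℤ) < i → compFun 𝒜 G i x = 0 := by
  obtain ⟨s, hs⟩ := exists_sum 𝒜 x
  have h1 : ∀ n : ℤ, ∃ L : ℕ, ∀ i : ℤ, (L : ℤ) < i → compFun 𝒜 G i (GradedRing.proj 𝒜 n x) = 0 := by
    intro n
    obtain ⟨t, ht⟩ := proj_finite 𝒜 (G (GradedRing.proj 𝒜 n x))
    refine ⟨t.sup (fun j => (j - n).toNat), fun i hi => ?_⟩
    rw [compFun_hom G i (proj_mem 𝒜 n x)]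
    apply ht
    intro hmem
    have := Finset.le_sup (f := fun j => (j - n).toNat) hmem
    have := this
    omega
  choose L hL using h1
  refine ⟨s.sup L, fun i hi => ?_⟩
  rw [hs, map_sum]
  apply Finset.sum_eq_zero
  intro n hn
  apply hL
  have := Finset.le_sup (f := L) hn
  omega

theorem proj_G_step {d : ℕ} {G : B →+ B} {l : ℤ}
    (hl : ∀ i, l < i → ∀ x ∈ verZ 𝒜 d, compFun 𝒜 G i x = 0) {y : B} (hy : y ∈ verZ 𝒜 d) {M : ℤ}
    (hM : ∀ a, M < a → GradedRing.proj 𝒜 a y = 0) {m : ℤ} (hm : M + l ≤ m) :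
    GradedRing.proj 𝒜 m (G y) = compFun 𝒜 G (m - M) (GradedRing.proj 𝒜 M y) := by
  obtain ⟨s, hs, hs'⟩ := exists_sum' 𝒜 y
  have e : ∀ a, GradedRing.proj 𝒜 m (G (GradedRing.proj 𝒜 a y)) =
      compFun 𝒜 G (m - a) (GradedRing.proj 𝒜 a y) := by
    intro a
    rw [compFun_hom G _ (proj_mem 𝒜 a y), add_sub_cancel]
  conv_lhs => rw [hs]
  rw [map_sum, map_sum, Finset.sum_eq_single M]
  · exact e M
  · intro a _ ha
    rw [e]
    rcases lt_or_gt_of_ne ha with h | h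
    · exact hl _ (by omega) _ (verZ_proj_mem 𝒜 hy a)
    · rw [hM a h, map_zero]
  · intro h
    rw [hs' M h]; simp

variable (K) in
theorem exists_HL (k : Type*) [Field k] [Algebra k B] [Algebra.FiniteType k B] {d : ℕ}
    (hdN : d ∈ NRset 𝒜) : ∃ (δ : ℤ) (E : Derivation ℤ K K), HL 𝒜 d δ E := by
  obtain ⟨hd, D, hD, hD0⟩ := hdN
  have inj : Function.Injective (algebraMap B K) := IsFractionRing.injective B K
  obtain ⟨G, hG⟩ := exists_G 𝒜 (D : verZ 𝒜 d →ₗ[ℤ] verZ 𝒜 d).toAddMonoidHom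
  replace hG : ∀ x : verZ 𝒜 d, G x = D x := hG
  have hGmem : ∀ x ∈ verZ 𝒜 d, G x ∈ verZ 𝒜 d := by
    intro x hx
    have := hG ⟨x, hx⟩
    rw [show G x = _ from this]; exact Subtype.coe_prop _
  have hGl : ∀ x ∈ verZ 𝒜 d, ∀ y ∈ verZ 𝒜 d, G (x * y) = x * G y + y * G x := by
    intro x hx y hy
    have e := hG (⟨x, hx⟩ * ⟨y, hy⟩)
    rw [Derivation.leibniz] at e
    have e1 := hG ⟨x, hx⟩
    have e2 := hG ⟨y, hy⟩
    simp only at e1 e2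
    rw [e1, e2]
    exact e
  have hGit : ∀ n (x : verZ 𝒜 d), G^[n] x = (D^[n] x : verZ 𝒜 d) := by
    intro n
    induction n with
    | zero => intro x; rfl
    | succ n ih => intro x; rw [Function.iterate_succ_apply, Function.iterate_succ_apply, hG, ih]
  -- building derivations
  have mk : ∀ F : B →+ B, (∀ x ∈ verZ 𝒜 d, ∀ y ∈ verZ 𝒜 d, F (x * y) = x * F y + y * F x) →
      ∃ E : Derivation ℤ K K, ∀ x ∈ verZ 𝒜 d, E (algebraMap B K x) = algebraMap B K (F x) := by
    intro F hF
    let F1 : verZ 𝒜 d →+ K := ((algebraMap B K).toAddMonoidHom.comp F).comp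
      (verZ 𝒜 d).subtype.toAddMonoidHom
    obtain ⟨E, hE⟩ := extend_der 𝒜 hd (K := K) (Derivation.mk' F1.toIntLinearMap (by
      intro a b
      change algebraMap B K (F (a * b)) = (a : B) • algebraMap B K (F b) + (b : B) • algebraMap B K (F a)
      rw [hF _ a.2 _ b.2]
      simp [Algebra.smul_def]))
    exact ⟨E, fun x hx => hE ⟨x, hx⟩⟩
  -- the field k is killed
  have hk : ∀ c : k, G (algebraMap k B c) = 0 := by
    obtain ⟨E, hE⟩ := mk G hGl
    have hEn : ∀ n x, x ∈ verZ 𝒜 d → E^[n] (algebraMap B K x) = algebraMap B K (G^[n] x) := by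
      intro n
      induction n with
      | zero => intro x _; rfl
      | succ n ih =>
        intro x hx
        rw [Function.iterate_succ_apply, Function.iterate_succ_apply, hE x hx, ih _ (hGmem x hx)]
    have hnil : ∀ x ∈ verZ 𝒜 d, ∃ n, E^[n] (algebraMap B K x) = 0 := by
      intro x hx
      obtain ⟨n, -, hn⟩ := hD ⟨x, hx⟩
      refine ⟨n, ?_⟩
      have := hGit n ⟨x, hx⟩
      rw [hn] at this
      rw [hEn n x hx, show G^[n] x = _ from this]; simp
    have hmem : ∀ c : k, algebraMap k B c ∈ verZ 𝒜 d := fun c =>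
      mem_verZ_of_mem 𝒜 (dvd_zero _) (field_mem_zero 𝒜 c)
    intro c
    by_cases hc : c = 0
    · subst hc; simp
    obtain ⟨m, hm⟩ := hnil _ (hmem c)
    obtain ⟨n, hn⟩ := hnil _ (hmem c⁻¹)
    have := deriv_unit (D := E) (x := algebraMap B K (algebraMap k B c))
      (y := algebraMap B K (algebraMap k B c⁻¹))
      (by rw [← map_mul, ← map_mul, mul_inv_cancel₀ hc]; simp) hm hn
    rw [hE _ (hmem c)] at this
    apply inj; rw [this, map_zero]
  -- uniform bound
  let Q : ℕ → Subalgebra k B := fun N =>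
    { carrier := {x | x ∈ verZ 𝒜 d ∧ ∀ i : ℤ, (N : ℤ) < i → compFun 𝒜 G i x = 0}
      mul_mem' := by
        rintro a b ⟨ha, ha'⟩ ⟨hb, hb'⟩
        refine ⟨mul_mem ha hb, fun i hi => ?_⟩
        rw [compFun_leibniz hGl i ha hb, ha' i hi, hb' i hi]; simp
      add_mem' := by
        rintro a b ⟨ha, ha'⟩ ⟨hb, hb'⟩
        refine ⟨add_mem ha hb, fun i hi => ?_⟩
        rw [map_add, ha' i hi, hb' i hi, add_zero]
      algebraMap_mem' := by
        intro c
        refine ⟨mem_verZ_of_mem 𝒜 (dvd_zero _) (field_mem_zero 𝒜 c), fun i hi => ?_⟩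
        rw [compFun_hom G i (field_mem_zero 𝒜 c), hk, map_zero] }
  obtain ⟨N, hN⟩ := fg_uniform 𝒜 k hd Q
    (fun m n hmn x hx => ⟨hx.1, fun i hi => hx.2 i (by omega)⟩)
    (fun x hx => by
      obtain ⟨L, hL⟩ := exists_bound_compFun (𝒜 := 𝒜) G x
      exact ⟨L, hx, hL⟩)
  -- some component is nonzero
  have hnz : ∃ i : ℤ, ∃ x ∈ verZ 𝒜 d, compFun 𝒜 G i x ≠ 0 := by
    by_contra hcon
    push Not at hcon
    apply hD0
    ext x
    have : ∀ x ∈ verZ 𝒜 d, G x = 0 := by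
      intro x hx
      refine verZ_ind 𝒜 (p := fun x => G x = 0) ?_ ?_ ?_ hx
      · simp
      · intro x y hx hy; rw [map_add, hx, hy, add_zero]
      · intro n hn x hx
        apply proj_ext 𝒜
        intro j
        have := hcon (j - n) x (mem_verZ_of_mem 𝒜 hn hx)
        rw [compFun_hom G _ hx, add_sub_cancel] at this
        rw [this, map_zero]
    rw [← hG, this x x.2]; rfl
  obtain ⟨l, ⟨x0, hx0, hl0⟩, hl⟩ := Int.exists_greatest_of_bdd
    (P := fun i => ∃ x ∈ verZ 𝒜 d, compFun 𝒜 G i x ≠ 0)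
    ⟨N, by
      rintro z ⟨x, hx, hz⟩
      by_contra hc
      exact hz ((hN x hx).2 z (by omega))⟩ hnz
  have hl' : ∀ i, l < i → ∀ x ∈ verZ 𝒜 d, compFun 𝒜 G i x = 0 := by
    intro i hi x hx
    by_contra hc
    have := hl i ⟨x, hx, hc⟩
    omega
  have hhom : ∃ n : ℤ, (d : ℤ) ∣ n ∧ ∃ x ∈ 𝒜 n, compFun 𝒜 G l x ≠ 0 := by
    by_contra hcon
    push Not at hcon
    apply hl0
    refine verZ_ind 𝒜 (p := fun x => compFun 𝒜 G l x = 0) ?_ ?_ ?_ hx0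
    · simp
    · intro x y hx hy; rw [map_add, hx, hy, add_zero]
    · exact fun i hi x hx => hcon i hi x hx
  obtain ⟨n1, hn1, x1, hx1, hne⟩ := hhom
  obtain ⟨E, hE⟩ := mk (compFun 𝒜 G l) (fun x hx y hy => compFun_leibniz hGl l hx hy)
  refine ⟨l, E, ?_, ?_, ?_, ?_⟩
  · rw [compFun_hom G _ hx1] at hne
    by_contra hc
    apply hne
    apply verZ_proj 𝒜 (hGmem _ (mem_verZ_of_mem 𝒜 hn1 hx1))
    intro h; apply hc
    exact (dvd_add_right hn1).mp h
  · intro i hi x hx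
    refine ⟨compFun 𝒜 G l x, ?_, hE x (mem_verZ_of_mem 𝒜 hi hx)⟩
    rw [compFun_hom G _ hx]; exact proj_mem 𝒜 _ _
  · intro i hi x hx
    have hxS := mem_verZ_of_mem 𝒜 hi hx
    have key : ∀ j : ℕ, G^[j] x ∈ verZ 𝒜 d ∧
        (∀ a, i + j * l < a → GradedRing.proj 𝒜 a (G^[j] x) = 0) ∧
        E^[j] (algebraMap B K x) = algebraMap B K (GradedRing.proj 𝒜 (i + j * l) (G^[j] x)) := by
      intro j
      induction j with
      | zero =>
        refine ⟨hxS, ?_, ?_⟩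
        · intro a ha
          apply proj_of_mem_ne 𝒜 hx; rintro rfl; simp at ha
        · simp [proj_of_mem 𝒜 hx]
      | succ j ih =>
        obtain ⟨h1, h2, h3⟩ := ih
        simp only [Function.iterate_succ_apply']
        have ee : i + ((j + 1 : ℕ) : ℤ) * l = (i + j * l) + l := by push_cast; ring
        rw [ee]
        refine ⟨hGmem _ h1, ?_, ?_⟩
        · intro a ha
          rw [proj_G_step hl' h1 h2 (by omega)]
          exact hl' _ (by omega) _ (verZ_proj_mem 𝒜 h1 _)
        · rw [h3, hE _ (verZ_proj_mem 𝒜 h1 _), proj_G_step hl' h1 h2 le_rfl, add_sub_cancel_left]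
    obtain ⟨n, -, hn⟩ := hD ⟨x, hxS⟩
    refine ⟨n, ?_⟩
    rw [(key n).2.2]
    have := hGit n ⟨x, hxS⟩
    rw [hn] at this
    rw [show G^[n] x = _ from this]; simp
  · refine ⟨n1, hn1, x1, hx1, ?_⟩
    rw [hE _ (mem_verZ_of_mem 𝒜 hn1 hx1)]
    intro h; apply hne; apply inj; rw [h, map_zero]

end HLsec
end NRproof

namespace NRproof
set_option linter.unusedSectionVars false

section mult
variable {B : Type*} [CommRing B] [IsDomain B] [CharZero B]
  {𝒜 : ℤ → AddSubgroup B} [GradedRing 𝒜] {K : Type*} [Field K] [CharZero K] [Algebra B K] [IsFractionRing B K]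

theorem HL.iter {d : ℕ} {δ : ℤ} {D : Derivation ℤ K K} (h : HL 𝒜 d δ D) (n : ℕ) {i : ℤ}
    (hi : (d : ℤ) ∣ i) {x : B} (hx : x ∈ 𝒜 i) :
    ∃ y ∈ 𝒜 (i + n * δ), D^[n] (algebraMap B K x) = algebraMap B K y := by
  induction n with
  | zero => exact ⟨x, by simpa using hx, rfl⟩
  | succ n ih =>
    obtain ⟨y, hy, e⟩ := ih
    obtain ⟨z, hz, e'⟩ := h.map _ (dvd_add hi (h.dvd.mul_left n)) y hy
    refine ⟨z, mem_cast 𝒜 hz (by push_cast; ring), ?_⟩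
    rw [Function.iterate_succ_apply', e, e']

theorem iter_pow_slice {D : Derivation ℤ K K} {s a : K} (hs : D s = a) (ha : D a = 0) (n : ℕ) :
    D^[n] (s ^ n) = (n.factorial : K) * a ^ n := by
  induction n with
  | zero => simp
  | succ n ih =>
    have h1 : D (s ^ (n + 1)) = (((n + 1 : ℕ) : K) * a) * s ^ n := by
      rw [Derivation.leibniz_pow, hs]
      simp [smul_eq_mul]; ring
    rw [Function.iterate_succ_apply, h1, iter_const_mul, ih]
    · rw [Nat.factorial_succ]; push_cast; ring
    · rw [Derivation.leibniz, ha]; simp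

theorem der_const_mul {D : Derivation ℤ K K} {c : K} (hc : D c = 0) (x : K) :
    D (c * x) = c * D x := by
  rw [Derivation.leibniz, hc]; simp

theorem der_pow_zero {D : Derivation ℤ K K} {c : K} (hc : D c = 0) (n : ℕ) :
    D (c ^ n) = 0 := by
  rw [Derivation.leibniz_pow, hc]; simp

theorem HL.slice {d : ℕ} {δ : ℤ} {D : Derivation ℤ K K} (h : HL 𝒜 d δ D) {C : ℕ} (hC : 1 ≤ C) :
    ∃ (σ : ℤ) (s a : B), (d : ℤ) ∣ σ ∧ (C : ℤ) ∣ σ + δ ∧ s ∈ 𝒜 σ ∧ a ∈ 𝒜 (σ + δ) ∧ a ≠ 0 ∧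
      D (algebraMap B K s) = algebraMap B K a ∧ D (algebraMap B K a) = 0 := by
  have inj : Function.Injective (algebraMap B K) := IsFractionRing.injective B K
  obtain ⟨i, hi, x, hx, hne⟩ := h.nz
  obtain ⟨n, hn⟩ := h.nil i hi x hx
  have hx0 : algebraMap B K x ≠ 0 := by
    intro h0; rw [h0] at hne; simp at hne
  obtain ⟨m, -, hm⟩ := exists_hasDeg hx0 hn
  match m, hm with
  | 0, hm => exact absurd hm.deriv_eq_zero hne
  | m + 1, hm =>
    obtain ⟨s0, hs0, es⟩ := h.iter m hi hx
    have hd1 := dvd_add hi (h.dvd.mul_left m)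
    obtain ⟨a0, ha0, ea⟩ := h.map _ hd1 s0 hs0
    have e1 : D^[m + 1] (algebraMap B K x) = algebraMap B K a0 := by
      rw [Function.iterate_succ_apply', es, ea]
    have ha00 : a0 ≠ 0 := by
      rintro rfl
      apply hm.1; rw [e1, map_zero]
    have hDa : D (algebraMap B K a0) = 0 := by
      rw [← e1, ← Function.iterate_succ_apply' (f := D)]; exact hm.2
    obtain ⟨C', rfl⟩ : ∃ C', C = C' + 1 := ⟨C - 1, by omega⟩
    refine ⟨C' * (i + m * δ + δ) + (i + m * δ), a0 ^ C' * s0, a0 ^ (C' + 1), ?_, ?_, ?_, ?_, ?_, ?_, ?_⟩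
    · exact dvd_add ((dvd_add hd1 h.dvd).mul_left _) hd1
    · refine ⟨i + m * δ + δ, ?_⟩
      push_cast; ring
    · exact mul_mem' 𝒜 (pow_mem' 𝒜 ha0 C') hs0
    · refine mem_cast 𝒜 (pow_mem' 𝒜 ha0 (C' + 1)) ?_
      push_cast; ring
    · exact pow_ne_zero _ ha00
    · rw [map_mul (algebraMap B K), map_pow (algebraMap B K), der_const_mul (der_pow_zero hDa _), ea,
        map_pow (algebraMap B K), pow_succ]
    · rw [map_pow (algebraMap B K), der_pow_zero hDa]

theorem HL.claim (k : Type*) [Field k] [CharZero k] [Algebra k B]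
    {d C : ℕ} {δ σ : ℤ} {D : Derivation ℤ K K} (h : HL 𝒜 d δ D) (hdC : d ∣ C) {s a : B}
    (hσ : (d : ℤ) ∣ σ) (hα : (C : ℤ) ∣ σ + δ) (hs : s ∈ 𝒜 σ) (ha : a ∈ 𝒜 (σ + δ))
    (hDs : D (algebraMap B K s) = algebraMap B K a) (hDa : D (algebraMap B K a) = 0)
    {m : ℕ} (hm0 : 1 ≤ m)
    (hm : ∀ l : ℕ, 1 ≤ l → ∀ i : ℤ, ∀ f ∈ 𝒜 i, (d : ℤ) ∣ i → f ≠ 0 → D (algebraMap B K f) = 0 →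
      (C : ℤ) ∣ i - l * δ → m ≤ l)
    (hk : ∀ c : k, D (algebraMap B K (algebraMap k B c)) = 0) :
    ∀ (n : ℕ) (i : ℤ), (C : ℤ) ∣ i → ∀ x ∈ 𝒜 i, D^[n] (algebraMap B K x) = 0 →
      ∃ (N : ℕ) (z : B), algebraMap B K a ^ N * D (algebraMap B K x) =
        algebraMap B K s ^ (m - 1) * algebraMap B K z := by
  have inj : Function.Injective (algebraMap B K) := IsFractionRing.injective B K
  have hdC' : (d : ℤ) ∣ C := by exact_mod_cast hdC
  intro n
  induction n with
  | zero =>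
    intro i hi x hx hn
    refine ⟨0, 0, ?_⟩
    have : algebraMap B K x = 0 := hn
    rw [this]; simp
  | succ n ih =>
    intro i hi x hx hn
    obtain ⟨r, hr, er⟩ := h.iter n (hdC'.trans hi) hx
    by_cases hr0 : r = 0
    · exact ih i hi x hx (by rw [er, hr0, map_zero])
    have hDr : D (algebraMap B K r) = 0 := by
      rw [← er, ← Function.iterate_succ_apply' (f := D)]; exact hn
    rcases Nat.eq_zero_or_pos n with rfl | hnpos
    · refine ⟨0, 0, ?_⟩
      have : D (algebraMap B K x) = 0 := hn
      rw [this]; simp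
    have hmn : m ≤ n := hm n hnpos _ r hr (dvd_add (hdC'.trans hi) (h.dvd.mul_left n)) hr0 hDr
      (by simpa using hi)
    -- reduction
    have hfac : D ((n.factorial : K)) = 0 := by simp
    have hy : (n.factorial : B) * a ^ n * x - r * s ^ n ∈ 𝒜 (i + n * (σ + δ)) := by
      apply sub_mem
      · exact mem_cast 𝒜 (mul_mem' 𝒜 (mul_mem' 𝒜 (natCast_mem' 𝒜 _) (pow_mem' 𝒜 ha n)) hx) (by ring)
      · exact mem_cast 𝒜 (mul_mem' 𝒜 hr (pow_mem' 𝒜 hs n)) (by ring)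
    have eY : algebraMap B K ((n.factorial : B) * a ^ n * x - r * s ^ n) =
        ((n.factorial : K) * algebraMap B K a ^ n) * algebraMap B K x +
          -(algebraMap B K r * algebraMap B K s ^ n) := by
      simp; ring
    have hc : D ((n.factorial : K) * algebraMap B K a ^ n) = 0 := by
      rw [der_const_mul hfac, der_pow_zero hDa, mul_zero]
    obtain ⟨N, z, hz⟩ := ih _ (dvd_add hi (hα.mul_left n)) _ hy (by
      rw [eY, iter_add, iter_neg, iter_const_mul hc, iter_const_mul hDr, iter_pow_slice hDs hDa, er]
      ring)
    have hDp : D (algebraMap B K s ^ n) = n * algebraMap B K s ^ (n - 1) * algebraMap B K a := by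
      rw [Derivation.leibniz_pow, hDs]; simp [smul_eq_mul]; ring
    rw [eY, map_add, map_neg, der_const_mul hc, der_const_mul hDr, hDp] at hz
    let c : B := algebraMap k B (n.factorial : k)⁻¹
    have hcf : algebraMap B K c * (n.factorial : K) = 1 := by
      have : c * (n.factorial : B) = 1 := by
        have h1 : (n.factorial : B) = algebraMap k B (n.factorial : k) := by simp
        rw [h1, ← map_mul, inv_mul_cancel₀ (by exact_mod_cast n.factorial_ne_zero), map_one]
      have h2 := congrArg (algebraMap B K) this
      simpa using h2
    refine ⟨N + n, c * (z + n * a ^ (N + 1) * r * s ^ (n - m)), ?_⟩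
    have e1 : algebraMap B K s ^ (n - 1) = algebraMap B K s ^ (m - 1) * algebraMap B K s ^ (n - m) := by
      rw [← pow_add]; congr 1; omega
    rw [e1] at hz
    simp only [map_mul, map_add, map_pow, map_natCast]
    have e2 : algebraMap B K a ^ (N + n) * D (algebraMap B K x) = algebraMap B K c *
        (n.factorial * (algebraMap B K a ^ (N + n) * D (algebraMap B K x))) := by
      rw [← mul_assoc, hcf, one_mul]
    rw [e2]
    have e3 : n.factorial * (algebraMap B K a ^ (N + n) * D (algebraMap B K x)) =
      algebraMap B K s ^ (m - 1) * algebraMap B K z + algebraMap B K a ^ N *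
        (algebraMap B K r * (n * (algebraMap B K s ^ (m - 1) * algebraMap B K s ^ (n - m)) * algebraMap B K a)) := by
      rw [← hz]; ring
    rw [e3]; ring

theorem HL.k_zero (k : Type*) [Field k] [Algebra k B] {d : ℕ} {δ : ℤ} {D : Derivation ℤ K K}
    (h : HL 𝒜 d δ D) (c : k) : D (algebraMap B K (algebraMap k B c)) = 0 := by
  by_cases hc : c = 0
  · subst hc; simp
  obtain ⟨m, hm⟩ := h.nil 0 (dvd_zero _) _ (field_mem_zero 𝒜 c)
  obtain ⟨n, hn⟩ := h.nil 0 (dvd_zero _) _ (field_mem_zero 𝒜 c⁻¹)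
  exact deriv_unit (by rw [← map_mul, ← map_mul, mul_inv_cancel₀ hc]; simp) hm hn

theorem HL.multiple (k : Type*) [Field k] [CharZero k] [Algebra k B] [Algebra.FiniteType k B]
    {d C : ℕ} {δ : ℤ} {D : Derivation ℤ K K} (h : HL 𝒜 d δ D) (hC : 1 ≤ C) (hdC : d ∣ C) :
    ∃ (ε : ℤ) (E : Derivation ℤ K K), HL 𝒜 C ε E := by
  classical
  have inj : Function.Injective (algebraMap B K) := IsFractionRing.injective B K
  have hdC' : (d : ℤ) ∣ C := by exact_mod_cast hdC
  obtain ⟨σ, s, a, hσ, hα, hs, ha, ha0, hDs, hDa⟩ := h.slice hC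
  have hs0 : s ≠ 0 := by
    rintro rfl
    apply ha0; apply inj; rw [← hDs]; simp
  have hιs0 : algebraMap B K s ≠ 0 := by rwa [Ne, map_eq_zero_iff _ inj]
  have hιa0 : algebraMap B K a ≠ 0 := by rwa [Ne, map_eq_zero_iff _ inj]
  have hex : ∃ m : ℕ, 1 ≤ m ∧ ∃ i : ℤ, ∃ f ∈ 𝒜 i, (d : ℤ) ∣ i ∧ f ≠ 0 ∧
      D (algebraMap B K f) = 0 ∧ (C : ℤ) ∣ i - m * δ :=
    ⟨C, hC, 0, 1, one_mem' 𝒜, dvd_zero _, one_ne_zero, by simp, by simp⟩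
  obtain ⟨hm1, i0, f, hf, hi0, hf0, hDf, hfm⟩ := Nat.find_spec hex
  have hmin : ∀ l : ℕ, 1 ≤ l → ∀ i : ℤ, ∀ f ∈ 𝒜 i, (d : ℤ) ∣ i → f ≠ 0 → D (algebraMap B K f) = 0 →
      (C : ℤ) ∣ i - l * δ → Nat.find hex ≤ l := fun l hl i f hf hi hf0 hDf hd =>
    Nat.find_min' hex ⟨hl, i, f, hf, hi, hf0, hDf, hd⟩
  generalize Nat.find hex = m at *
  have hk := h.k_zero k
  have claim := h.claim k hdC hσ hα hs ha hDs hDa hm1 hmin hk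
  let Q : ℕ → Subalgebra k B := fun N =>
    { carrier := {x | ∃ z : B, algebraMap B K a ^ N * D (algebraMap B K x) =
        algebraMap B K s ^ (m - 1) * algebraMap B K z}
      mul_mem' := by
        rintro x y ⟨z, hz⟩ ⟨w, hw⟩
        refine ⟨x * w + y * z, ?_⟩
        rw [map_mul (algebraMap B K), Derivation.leibniz, map_add, map_mul, map_mul, smul_eq_mul, smul_eq_mul]
        linear_combination algebraMap B K x * hw + algebraMap B K y * hz
      add_mem' := by
        rintro x y ⟨z, hz⟩ ⟨w, hw⟩
        refine ⟨z + w, ?_⟩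
        simp only [map_add]
        linear_combination hz + hw
      algebraMap_mem' := by
        intro c
        exact ⟨0, by rw [hk]; simp⟩ }
  have hQmono : Monotone Q := by
    rintro M N hMN x ⟨z, hz⟩
    refine ⟨a ^ (N - M) * z, ?_⟩
    have : N = (N - M) + M := by omega
    rw [map_mul, map_pow]
    conv_lhs => rw [this, pow_add]
    linear_combination algebraMap B K a ^ (N - M) * hz
  obtain ⟨N, hN⟩ := fg_uniform 𝒜 k hC Q hQmono (fun x hx => by
    refine verZ_ind 𝒜 (p := fun x => ∃ N, x ∈ Q N) ?_ ?_ ?_ hx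
    · exact ⟨0, zero_mem _⟩
    · rintro x y ⟨M, hM⟩ ⟨N, hN⟩
      exact ⟨max M N, add_mem (hQmono (le_max_left _ _) hM) (hQmono (le_max_right _ _) hN)⟩
    · intro i hi x hx
      obtain ⟨n, hn⟩ := h.nil i (hdC'.trans hi) x hx
      exact claim n i hi x hx hn)
  have hιf0 : algebraMap B K f ≠ 0 := by rwa [Ne, map_eq_zero_iff _ inj]
  obtain ⟨g, hg⟩ : ∃ g : K, g = algebraMap B K f ^ (C - 1) * algebraMap B K a ^ N / algebraMap B K s ^ (m - 1) :=
    ⟨_, rfl⟩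
  have hg0 : g ≠ 0 := by
    rw [hg]
    exact div_ne_zero (mul_ne_zero (pow_ne_zero _ hιf0) (pow_ne_zero _ hιa0)) (pow_ne_zero _ hιs0)
  have hgs : algebraMap B K s ^ (m - 1) * g = algebraMap B K f ^ (C - 1) * algebraMap B K a ^ N := by
    rw [hg]; field_simp
  have hEmap : ∀ i : ℤ, (C : ℤ) ∣ i → ∀ x ∈ 𝒜 i,
      ∃ y ∈ 𝒜 (i + (((C - 1 : ℕ) : ℤ) * i0 + δ + N * (σ + δ) - ((m - 1 : ℕ) : ℤ) * σ)),
        (g • D) (algebraMap B K x) = algebraMap B K y := by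
    intro i hi x hx
    obtain ⟨z, hz⟩ := hN x (mem_verZ_of_mem 𝒜 hi hx)
    obtain ⟨y, hy, ey⟩ := h.map i (hdC'.trans hi) x hx
    have hzmem : z ∈ 𝒜 (i + δ + N * (σ + δ) - ((m - 1 : ℕ) : ℤ) * σ) := by
      refine mem_of_mul_mem 𝒜 (pow_mem' 𝒜 hs (m - 1)) (pow_ne_zero _ hs0) ?_
      have : s ^ (m - 1) * z = a ^ N * y := by
        apply inj
        rw [map_mul, map_mul, map_pow, map_pow, ← hz, ey]
      rw [this]
      exact mem_cast 𝒜 (mul_mem' 𝒜 (pow_mem' 𝒜 ha N) hy) (by ring)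
    refine ⟨f ^ (C - 1) * z, mem_cast 𝒜 (mul_mem' 𝒜 (pow_mem' 𝒜 hf (C - 1)) hzmem) (by ring), ?_⟩
    apply mul_left_cancel₀ (pow_ne_zero (m - 1) hιs0)
    rw [Derivation.smul_apply, smul_eq_mul, ← mul_assoc, hgs, map_mul, map_pow]
    linear_combination algebraMap B K f ^ (C - 1) * hz
  have hεC : (C : ℤ) ∣ (((C - 1 : ℕ) : ℤ) * i0 + δ + N * (σ + δ) - ((m - 1 : ℕ) : ℤ) * σ) := by
    obtain ⟨u, hu⟩ := hα
    obtain ⟨v, hv⟩ := hfm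
    refine ⟨i0 - v + N * u - ((m : ℤ) - 1) * u, ?_⟩
    rw [Nat.cast_sub hC, Nat.cast_sub hm1]
    push_cast
    linear_combination (N - (m : ℤ) + 1) * hu - hv
  have hdegs : HasDeg D (algebraMap B K s) 1 := by
    refine HasDeg.of_deriv (n := 0) ?_
    rw [hDs]; exact hasDeg_const hιa0 hDa
  have hdegc : HasDeg D (algebraMap B K f ^ (C - 1) * algebraMap B K a ^ N) 0 := by
    refine hasDeg_const (mul_ne_zero (pow_ne_zero _ hιf0) (pow_ne_zero _ hιa0)) ?_
    rw [der_const_mul (der_pow_zero hDf _), der_pow_zero hDa, mul_zero]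
  refine ⟨_, g • D, hεC, hEmap, ?_, ?_⟩
  · have key : ∀ n : ℕ, ∀ i : ℤ, (C : ℤ) ∣ i → ∀ x ∈ 𝒜 i, HasDeg D (algebraMap B K x) n →
        ∃ l, (g • D)^[l] (algebraMap B K x) = 0 := by
      intro n
      induction n using Nat.strong_induction_on with
      | _ n ih =>
        intro i hi x hx hn
        obtain ⟨y, hy, ey⟩ := hEmap i hi x hx
        by_cases hy0 : y = 0
        · refine ⟨1, ?_⟩
          rw [Function.iterate_one, ey, hy0, map_zero]
        have hιy0 : algebraMap B K y ≠ 0 := by rwa [Ne, map_eq_zero_iff _ inj]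
        match n, hn, ih with
        | 0, hn, _ =>
          exact ⟨1, by rw [Function.iterate_one, Derivation.smul_apply, hn.deriv_eq_zero, smul_zero]⟩
        | n + 1, hn, ih =>
          have hC2 := dvd_add hi hεC
          obtain ⟨q, hq⟩ := h.nil _ (hdC'.trans hC2) y hy
          obtain ⟨l, -, hl⟩ := exists_hasDeg hιy0 hq
          have h1 := (hdegs.pow (m - 1)).mul hl
          have h2 := hdegc.mul hn.deriv
          have e : algebraMap B K s ^ (m - 1) * algebraMap B K y =
              algebraMap B K f ^ (C - 1) * algebraMap B K a ^ N * D (algebraMap B K x) := by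
            rw [← ey, Derivation.smul_apply, smul_eq_mul, ← mul_assoc, hgs]
          rw [e] at h1
          have := h1.unique h2
          obtain ⟨t, ht⟩ := ih l (by omega) _ hC2 y hy hl
          exact ⟨t + 1, by rw [Function.iterate_succ_apply, ey, ht]⟩
    intro i hi x hx
    by_cases hx0 : algebraMap B K x = 0
    · exact ⟨0, hx0⟩
    obtain ⟨q, hq⟩ := h.nil _ (hdC'.trans hi) x hx
    obtain ⟨l, -, hl⟩ := exists_hasDeg hx0 hq
    exact key l i hi x hx hl
  · obtain ⟨i, hi, x, hx, hne⟩ := h.nz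
    refine ⟨C * i, dvd_mul_right _ _, x ^ C, pow_mem' 𝒜 hx C, ?_⟩
    have hx0 : algebraMap B K x ≠ 0 := by
      intro h0; rw [h0] at hne; simp at hne
    rw [Derivation.smul_apply, smul_eq_mul, map_pow, Derivation.leibniz_pow]
    simp only [smul_eq_mul, nsmul_eq_mul]
    refine mul_ne_zero hg0 (mul_ne_zero (by exact_mod_cast (by omega : C ≠ 0)) (mul_ne_zero (pow_ne_zero _ hx0) hne))

end mult
end NRproof

namespace NRproof
set_option linter.unusedSectionVars false

section H4
variable {B : Type*} [CommRing B] [IsDomain B]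

/-- The ideal of all `c` such that `z` divides `b * c`. -/
def colonI (z b : B) : Ideal B where
  carrier := {c | z ∣ b * c}
  zero_mem' := by simp
  add_mem' := by
    intro x y hx hy
    simp only [Set.mem_ofPred_eq] at *
    rw [mul_add]; exact dvd_add hx hy
  smul_mem' := by
    intro c x hx
    simp only [Set.mem_ofPred_eq, smul_eq_mul] at *
    rw [mul_left_comm]; exact hx.mul_left c

theorem mem_colonI {z b c : B} : c ∈ colonI z b ↔ z ∣ b * c := Iff.rfl

theorem heightOne_of_le {q : Ideal B} (hq : q.IsPrime) (h0 : q ≠ ⊥) (h : q.height ≤ 1)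
    [IsNoetherianRing B] : heightOne q := by
  refine ⟨hq, ⟨⊥, Ideal.isPrime_bot, bot_lt_iff_ne_bot.mpr h0⟩, ?_⟩
  intro p r hp hr hpr hrq
  have h1 := Ideal.height_add_one_le_of_lt_of_isPrime hpr
  have h2 := Ideal.height_add_one_le_of_lt_of_isPrime hrq
  have h3 : (1 : ℕ∞) ≤ r.height := le_trans (by simp) h1
  have h4 : (1 : ℕ∞) + 1 ≤ 1 := le_trans (by gcongr) (h2.trans h)
  exact absurd h4 (by decide)

theorem colon_heightOne [IsNoetherianRing B] [IsIntegrallyClosed B] {z b : B} (hz : z ≠ 0)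
    (hb : ¬ z ∣ b) (hq : (colonI z b).IsPrime) : heightOne (colonI z b) := by
  have hzq : z ∈ colonI z b := mem_colonI.mpr (dvd_mul_left _ _)
  have hne : colonI z b ≠ ⊥ := by
    intro h
    rw [h, Ideal.mem_bot] at hzq
    exact hz hzq
  refine heightOne_of_le hq hne ?_
  by_cases hcase : ∀ c ∈ colonI z b, ∃ u ∈ colonI z b, b * c = z * u
  · exfalso
    let K := FractionRing B
    have inj : Function.Injective (algebraMap B K) := IsFractionRing.injective B K
    have hιz : algebraMap B K z ≠ 0 := by rwa [Ne, map_eq_zero_iff _ inj]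
    have hIntegral : IsIntegral B (algebraMap B K b / algebraMap B K z) := by
      refine isIntegral_of_smul_mem_submodule (M := K)
        (Submodule.map (Algebra.linearMap B K) (colonI z b)) ?_ ?_ _ ?_
      · intro h
        have : algebraMap B K z ∈ Submodule.map (Algebra.linearMap B K) (colonI z b) :=
          ⟨z, hzq, rfl⟩
        rw [h, Submodule.mem_bot] at this
        exact hιz this
      · exact Submodule.FG.map _ (IsNoetherian.noetherian _)
      · rintro _ ⟨c, hc, rfl⟩
        obtain ⟨u, hu, e⟩ := hcase c hc
        refine ⟨u, hu, ?_⟩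
        have e' := congrArg (algebraMap B K) e
        rw [map_mul, map_mul] at e'
        simp only [Algebra.linearMap_apply, smul_eq_mul]
        rw [div_mul_eq_mul_div, e', mul_div_cancel_left₀ _ hιz]
    obtain ⟨t, ht⟩ := IsIntegrallyClosed.isIntegral_iff.mp hIntegral
    apply hb
    refine ⟨t, inj ?_⟩
    rw [map_mul, ht, mul_comm, div_mul_cancel₀ _ hιz]
  · push Not at hcase
    obtain ⟨c, hc, hcu⟩ := hcase
    obtain ⟨u, hu⟩ := mem_colonI.mp hc
    have huq : u ∉ colonI z b := fun h => hcu u h hu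
    refine Ideal.height_le_one_of_isPrincipal_of_mem_minimalPrimes (Ideal.span {c}) _ ?_
    refine ⟨⟨hq, (Ideal.span_singleton_le_iff_mem _).mpr hc⟩, ?_⟩
    rintro p ⟨hp, hcp⟩ hpq v hv
    obtain ⟨v', hv'⟩ := mem_colonI.mp hv
    have e : u * v = c * v' := by
      apply mul_left_cancel₀ hz
      linear_combination (-v) * hu + c * hv'
    have : u * v ∈ p := by
      rw [e]; exact p.mul_mem_right _ ((Ideal.span_singleton_le_iff_mem _).mp hcp)
    exact (hp.mem_or_mem this).resolve_left (fun h => huq (hpq h))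

theorem dvd_of_ht1 [IsNoetherianRing B] [IsIntegrallyClosed B] {𝒜 : ℤ → AddSubgroup B} [GradedRing 𝒜]
    {z y : B} (hz0 : z ≠ 0) {i j : ℤ} (hz : z ∈ 𝒜 i) (hy : y ∈ 𝒜 j)
    (h : ∀ q ∈ homogHt1 𝒜, ∃ w ∉ q, z ∣ w * y) : z ∣ y := by
  by_contra hcon
  obtain ⟨q, ⟨b, ⟨l, hb⟩, hzb, hyb, rfl⟩, hmax⟩ := (set_has_maximal_iff_noetherian (R := B) (M := B)).mpr
    inferInstance {J : Ideal B | ∃ b : B, (∃ l : ℤ, b ∈ 𝒜 l) ∧ ¬ z ∣ b ∧ y ∣ b ∧ J = colonI z b}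
    ⟨_, y, ⟨j, hy⟩, hcon, dvd_rfl, rfl⟩
  have hhom : ∀ (n : ℤ) (c : B), c ∈ colonI z b → GradedRing.proj 𝒜 n c ∈ colonI z b := by
    intro n c hc
    obtain ⟨t, ht⟩ := mem_colonI.mp hc
    refine mem_colonI.mpr ⟨GradedRing.proj 𝒜 (l + n - i) t, ?_⟩
    rw [← proj_mul_left 𝒜 hb, ← proj_mul_left 𝒜 hz, ht, add_sub_cancel]
  have hH : Ideal.IsHomogeneous 𝒜 (colonI z b) := by
    intro n c hc
    have := hhom n c hc
    rwa [GradedRing.proj_apply] at this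
  have hprime : (colonI z b).IsPrime := by
    refine Ideal.IsHomogeneous.isPrime_of_homogeneous_mem_or_mem hH ?_ ?_
    · rw [Ne, Ideal.eq_top_iff_one, mem_colonI, mul_one]; exact hzb
    · rintro u v ⟨m, hu⟩ - huv
      by_contra hc
      push Not at hc
      have hle : colonI z b ≤ colonI z (b * u) := by
        intro c hc
        rw [mem_colonI] at *
        rw [mul_right_comm]; exact hc.mul_right _
      refine hmax (colonI z (b * u)) ⟨b * u, ⟨l + m, mul_mem' 𝒜 hb hu⟩, hc.1, hyb.mul_right u, rfl⟩ ?_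
      refine lt_of_le_of_ne hle ?_
      intro he
      apply hc.2
      rw [he, mem_colonI, mul_assoc]; exact huv
  have hht : colonI z b ∈ homogHt1 𝒜 := by
    refine ⟨colon_heightOne hz0 hzb hprime, le_antisymm ?_ ?_⟩
    · intro c hc
      obtain ⟨s, hs⟩ := exists_sum 𝒜 c
      rw [hs]
      exact sum_mem fun n _ => Ideal.subset_span ⟨hhom n c hc, n, proj_mem 𝒜 n c⟩
    · rw [Ideal.span_le]; exact fun c hc => hc.1
  obtain ⟨w, hw, hwz⟩ := h _ hht
  apply hw
  rw [mem_colonI]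
  obtain ⟨t, rfl⟩ := hyb
  rw [mul_right_comm, mul_comm y w]; exact hwz.mul_right t

variable [CharZero B] {𝒜 : ℤ → AddSubgroup B} [GradedRing 𝒜] {K : Type*} [Field K] [CharZero K]
  [Algebra B K] [IsFractionRing B K]

theorem natCast_unit (k : Type*) [Field k] [CharZero k] [Algebra k B] {d : ℕ} (hd : 1 ≤ d) :
    IsUnit (d : B) := by
  have h1 : (d : B) = algebraMap k B (d : k) := by simp
  rw [h1]
  exact (IsUnit.mk0 (d : k) (by exact_mod_cast (by omega : d ≠ 0))).map _

theorem HL.descend (k : Type*) [Field k] [CharZero k] [Algebra k B] [Algebra.FiniteType k B]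
    [IsIntegrallyClosed B] {d g : ℕ} {δ : ℤ} {D : Derivation ℤ K K} (h : HL 𝒜 d δ D) (hd : 1 ≤ d)
    (hgd : g ∣ d)
    (hw : ∀ p ∈ homogHt1 𝒜, ∀ n : ℤ, (g : ℤ) ∣ n → ∃ j : ℤ, ∃ w ∈ 𝒜 j, w ∉ p ∧ (d : ℤ) ∣ j + n) :
    HL 𝒜 g δ D := by
  have inj : Function.Injective (algebraMap B K) := IsFractionRing.injective B K
  have : IsNoetherianRing B := Algebra.FiniteType.isNoetherianRing k B
  have hgd' : (g : ℤ) ∣ d := by exact_mod_cast hgd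
  have hdK : (d : K) ≠ 0 := by exact_mod_cast (by omega : d ≠ 0)
  have hDpow : ∀ x : K, D (x ^ d) = d * x ^ (d - 1) * D x := by
    intro x
    rw [Derivation.leibniz_pow]; simp [smul_eq_mul]; ring
  have hmap : ∀ i : ℤ, (g : ℤ) ∣ i → ∀ x ∈ 𝒜 i,
      ∃ y ∈ 𝒜 (i + δ), D (algebraMap B K x) = algebraMap B K y := by
    intro n hn x hx
    by_cases hx0 : x = 0
    · exact ⟨0, zero_mem _, by simp [hx0]⟩
    obtain ⟨y, hy, ey⟩ := h.map (d * n) (dvd_mul_right _ _) (x ^ d) (pow_mem' 𝒜 hx d)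
    rw [map_pow, hDpow] at ey
    have hz : (d : B) * x ^ (d - 1) ∈ 𝒜 (0 + ((d - 1 : ℕ) : ℤ) * n) :=
      mul_mem' 𝒜 (natCast_mem' 𝒜 d) (pow_mem' 𝒜 hx (d - 1))
    have hz0 : (d : B) * x ^ (d - 1) ≠ 0 :=
      mul_ne_zero (by exact_mod_cast (by omega : d ≠ 0)) (pow_ne_zero _ hx0)
    obtain ⟨t, ht⟩ : (d : B) * x ^ (d - 1) ∣ y := by
      refine dvd_of_ht1 hz0 hz hy ?_
      intro q hq
      obtain ⟨j, w, hwj, hwq, hdj⟩ := hw q hq n hn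
      have hqp : q.IsPrime := hq.1.1
      refine ⟨(d : B) * w ^ d, ?_, ?_⟩
      · intro hmem
        rcases hqp.mem_or_mem hmem with h1 | h1
        · exact hqp.ne_top (Ideal.eq_top_of_isUnit_mem _ h1 (natCast_unit k hd))
        · exact hwq (hqp.mem_of_pow_mem _ h1)
      · obtain ⟨y1, -, e1⟩ := h.map _ hdj (w * x) (mul_mem' 𝒜 hwj hx)
        obtain ⟨y2, -, e2⟩ := h.map (d * j) (dvd_mul_right _ _) (w ^ d) (pow_mem' 𝒜 hwj d)
        rw [map_pow, hDpow] at e2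
        rw [map_mul, Derivation.leibniz, smul_eq_mul, smul_eq_mul] at e1
        refine ⟨d * w ^ (d - 1) * y1 - x * y2, inj ?_⟩
        have hdd : w ^ d = w ^ (d - 1) * w := by
          rw [← pow_succ]; congr 1; omega
        rw [hdd]
        simp only [map_mul, map_sub, map_pow, map_natCast]
        rw [← ey, ← e1, ← e2]
        ring
    have hDx : D (algebraMap B K x) = algebraMap B K t := by
      have hιz : algebraMap B K ((d : B) * x ^ (d - 1)) ≠ 0 := by rwa [Ne, map_eq_zero_iff _ inj]
      apply mul_left_cancel₀ hιz
      rw [← map_mul, ← ht, ← ey]; simp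
    refine ⟨t, mem_of_mul_mem 𝒜 hz hz0 ?_, hDx⟩
    rw [← ht]
    refine mem_cast 𝒜 hy ?_
    rw [Nat.cast_sub hd]; push_cast; ring
  refine ⟨hgd'.trans h.dvd, hmap, ?_, ?_⟩
  · have key : ∀ n : ℕ, ∀ i : ℤ, (g : ℤ) ∣ i → ∀ x ∈ 𝒜 i, HasDeg D (algebraMap B K x ^ d) n →
        ∃ l, D^[l] (algebraMap B K x) = 0 := by
      intro n
      induction n using Nat.strong_induction_on with
      | _ n ih =>
        intro i hi x hx hn
        obtain ⟨y, hy, ey⟩ := hmap i hi x hx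
        by_cases hy0 : y = 0
        · refine ⟨1, ?_⟩
          rw [Function.iterate_one, ey, hy0, map_zero]
        have hιy0 : algebraMap B K y ≠ 0 := by rwa [Ne, map_eq_zero_iff _ inj]
        have hx0 : algebraMap B K x ≠ 0 := by
          intro h0
          rw [h0, map_zero] at ey
          exact hιy0 ey.symm
        match n, hn, ih with
        | 0, hn, _ =>
          have := hn.deriv_eq_zero
          rw [hDpow] at this
          refine ⟨1, ?_⟩
          rcases mul_eq_zero.mp this with h1 | h1
          · exact absurd h1 (mul_ne_zero hdK (pow_ne_zero _ hx0))
          · exact h1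
        | n + 1, hn, ih =>
          obtain ⟨q, hq⟩ := h.nil (d * (i + δ)) (dvd_mul_right _ _) (y ^ d) (pow_mem' 𝒜 hy d)
          rw [map_pow] at hq
          obtain ⟨l, -, hl⟩ := exists_hasDeg (pow_ne_zero _ hιy0) hq
          have h1 := hn.deriv.pow d
          rw [hDpow, ey] at h1
          have h2 := ((hasDeg_const (D := D) (a := (d : K) ^ d) (pow_ne_zero _ hdK)
            (der_pow_zero (by simp) _)).mul (hn.pow (d - 1))).mul hl
          have e : ((d : K) ^ d * ((algebraMap B K x ^ d) ^ (d - 1)) * algebraMap B K y ^ d) =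
            ((d : K) * algebraMap B K x ^ (d - 1) * algebraMap B K y) ^ d := by
            rw [mul_pow, mul_pow, ← pow_mul, ← pow_mul, mul_comm d (d - 1)]
          rw [e] at h2
          have h3 := h1.unique h2
          have hlt : l < n + 1 := by
            obtain ⟨d', rfl⟩ : ∃ d', d = d' + 1 := ⟨d - 1, by omega⟩
            simp only [Nat.add_sub_cancel] at h3
            nlinarith
          obtain ⟨t, ht⟩ := ih l hlt (i + δ) (dvd_add hi (hgd'.trans h.dvd)) y hy hl
          exact ⟨t + 1, by rw [Function.iterate_succ_apply, ey, ht]⟩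
    intro i hi x hx
    by_cases hx0 : algebraMap B K x = 0
    · exact ⟨0, hx0⟩
    obtain ⟨q, hq⟩ := h.nil (d * i) (dvd_mul_right _ _) (x ^ d) (pow_mem' 𝒜 hx d)
    rw [map_pow] at hq
    obtain ⟨l, -, hl⟩ := exists_hasDeg (pow_ne_zero _ hx0) hq
    exact key l i hi x hx hl
  · obtain ⟨i, hi, x, hx, hne⟩ := h.nz
    exact ⟨i, hgd'.trans hi, x, hx, hne⟩

theorem exists_deg_Mbar {p : Ideal B} (hp : p.IsPrime) {d : ℕ} (hd : 1 ≤ d) {n : ℤ}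
    (hn : n ∈ Mbar 𝒜 p) : ∃ j : ℤ, ∃ w ∈ 𝒜 j, w ∉ p ∧ (d : ℤ) ∣ j - n := by
  induction hn using AddSubgroup.closure_induction with
  | mem i hi =>
    obtain ⟨w, hw, hwp⟩ := Set.not_subset.mp hi
    exact ⟨i, w, hw, hwp, by simp⟩
  | zero => exact ⟨0, 1, one_mem' 𝒜, fun h => hp.ne_top ((Ideal.eq_top_iff_one _).mpr h), by simp⟩
  | add a b _ _ ha hb =>
    obtain ⟨j, w, hw, hwp, h1⟩ := ha
    obtain ⟨j', w', hw', hwp', h2⟩ := hb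
    refine ⟨j + j', w * w', mul_mem' 𝒜 hw hw', fun h => (hp.mem_or_mem h).elim hwp hwp', ?_⟩
    have := dvd_add h1 h2
    rwa [show j + j' - (a + b) = j - a + (j' - b) by ring]
  | neg a _ ha =>
    obtain ⟨j, w, hw, hwp, ⟨u, hu⟩⟩ := ha
    refine ⟨((d - 1 : ℕ) : ℤ) * j, w ^ (d - 1), pow_mem' 𝒜 hw (d - 1), fun h => hwp (hp.mem_of_pow_mem _ h), ?_⟩
    refine ⟨j - u, ?_⟩
    rw [Nat.cast_sub hd]; push_cast
    linear_combination -hu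

theorem mem_groupGen {H : AddSubgroup ℤ} {n : ℤ} : n ∈ H ↔ (groupGen H : ℤ) ∣ n := by
  rw [groupGen, Int.natAbs_dvd, ← Submodule.IsPrincipal.mem_iff_generator_dvd]
  rfl

theorem verZ_eq_of {d e : ℕ} (h : ∀ n : ℤ, 𝒜 n ≠ ⊥ → ((d : ℤ) ∣ n ↔ (e : ℤ) ∣ n)) :
    verZ 𝒜 d = verZ 𝒜 e := by
  have aux : ∀ d e : ℕ, (∀ n : ℤ, 𝒜 n ≠ ⊥ → ((d : ℤ) ∣ n → (e : ℤ) ∣ n)) → verZ 𝒜 d ≤ verZ 𝒜 e := by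
    intro d e h x hx
    refine verZ_ind 𝒜 (p := fun x => x ∈ verZ 𝒜 e) (zero_mem _) (fun _ _ => add_mem) ?_ hx
    intro i hi x hx
    by_cases h0 : 𝒜 i = ⊥
    · rw [h0, AddSubgroup.mem_bot] at hx
      rw [hx]; exact zero_mem _
    · exact mem_verZ_of_mem 𝒜 (h i h0 hi) hx
  exact le_antisymm (aux d e fun n hn => (h n hn).mp) (aux e d fun n hn => (h n hn).mpr)

theorem NR_of_verZ_eq {d e : ℕ} (he : 1 ≤ e) (h : verZ 𝒜 d = verZ 𝒜 e) (hd : d ∈ NRset 𝒜) :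
    e ∈ NRset 𝒜 := by
  obtain ⟨-, hD⟩ := hd
  rw [h] at hD
  exact ⟨he, hD⟩

end H4
end NRproof

/-- Let k be a field of characteristic 0 and B a ℤ-graded normal affine k-domain.
Then (a) NR(B) = ⋃_{d ∈ M(B)} {d, 2d, 3d, …}, and (b) every d ∈ M(B) divides ē(B)
and satisfies d ⊘ e(B) = d. -/
theorem NR_is_union_of_multiples
    {k : Type*} [Field k] [CharZero k]
    {B : Type*} [CommRing B] [IsDomain B] [IsIntegrallyClosed B]
    [Algebra k B] [Algebra.FiniteType k B]
    (𝒜 : ℤ → AddSubgroup B) [GradedRing 𝒜] :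
    (NRset 𝒜 = ⋃ d ∈ MsetZ 𝒜, { m : ℕ | ∃ c : ℕ, 1 ≤ c ∧ m = c * d }) ∧
    (∀ d ∈ MsetZ 𝒜, d ∣ ebarB 𝒜 ∧ odiv d (eB 𝒜) = d) := by
  have : CharZero B := charZero_of_injective_algebraMap (algebraMap k B).injective
  have : CharZero (FractionRing B) :=
    charZero_of_injective_algebraMap (IsFractionRing.injective B (FractionRing B))
  refine ⟨?_, ?_⟩
  · ext m
    simp only [Set.mem_iUnion, Set.mem_ofPred_eq, exists_prop]
    constructor
    · intro hm
      induction m using Nat.strong_induction_on with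
      | _ m ih =>
        by_cases hM : m ∈ MsetZ 𝒜
        · exact ⟨m, hM, 1, le_rfl, by simp⟩
        · have : ∃ e ∈ NRset 𝒜, e ∣ m ∧ e ≠ m := by
            by_contra hc
            push Not at hc
            exact hM ⟨hm, hc⟩
          obtain ⟨e, he, hem, hne⟩ := this
          have hm1 : 1 ≤ m := hm.1
          obtain ⟨d, hd, c, hc, rfl⟩ := ih e (lt_of_le_of_ne (Nat.le_of_dvd hm1 hem) hne) he
          obtain ⟨b, rfl⟩ := hem
          refine ⟨d, hd, c * b, ?_, by ring⟩
          rcases Nat.eq_zero_or_pos b with rfl | hb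
          · simp at hm1
          · exact Nat.mul_pos hc hb
    · rintro ⟨d, hd, c, hc, rfl⟩
      have hd1 : 1 ≤ d := hd.1.1
      have hC : 1 ≤ c * d := Nat.mul_pos hc hd1
      obtain ⟨δ, D, h⟩ := NRproof.exists_HL (FractionRing B) k hd.1
      obtain ⟨ε, E, h'⟩ := h.multiple k hC (dvd_mul_left d c)
      exact h'.mem_NR hC
  · intro d hd
    have hd1 : 1 ≤ d := hd.1.1
    obtain ⟨δ, D, h⟩ := NRproof.exists_HL (FractionRing B) k hd.1
    constructor
    · by_cases hne : (homogHt1 𝒜).Nonempty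
      · rw [ebarB, if_pos hne]
        generalize he : groupGen (⨅ p : homogHt1 𝒜, Mbar 𝒜 p.1) = e
        have hg1 : 1 ≤ Nat.gcd d e := Nat.gcd_pos_of_pos_left _ hd1
        have h' := h.descend k hd1 (Nat.gcd_dvd_left d e) (by
          intro p hp n hn
          have hn' : ((Nat.gcd d e : ℕ) : ℤ) ∣ -n := (dvd_neg).mpr hn
          obtain ⟨t, ht⟩ := hn'
          have hb := Nat.gcd_eq_gcd_ab d e
          have hmem : (e : ℤ) * (Nat.gcdB d e * t) ∈ Mbar 𝒜 p := by
            have h1 : (e : ℤ) * (Nat.gcdB d e * t) ∈ (⨅ p : homogHt1 𝒜, Mbar 𝒜 p.1) := by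
              rw [NRproof.mem_groupGen, he]; exact dvd_mul_right _ _
            exact (AddSubgroup.mem_iInf.mp h1) ⟨p, hp⟩
          obtain ⟨j, w, hw, hwp, hdj⟩ := NRproof.exists_deg_Mbar hp.1.1 hd1 hmem
          refine ⟨j, w, hw, hwp, ?_⟩
          have h2 : j + n = (j - e * (Nat.gcdB d e * t)) - d * (Nat.gcdA d e * t) := by
            rw [hb] at ht
            linear_combination -ht
          rw [h2]
          exact dvd_sub hdj (dvd_mul_right _ _))
        have := hd.2 _ (h'.mem_NR hg1) (Nat.gcd_dvd_left d e)
        rw [← this]; exact Nat.gcd_dvd_right d e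
      · have h' := h.descend k hd1 (one_dvd d) (by
          intro p hp
          exact absurd ⟨p, hp⟩ hne)
        have := hd.2 1 (h'.mem_NR le_rfl) (one_dvd d)
        rw [← this]; exact one_dvd _
    · have hdeg : ∀ n : ℤ, 𝒜 n ≠ ⊥ → (eB 𝒜 : ℤ) ∣ n := by
        intro n hn
        rw [eB, ← NRproof.mem_groupGen]
        exact AddSubgroup.subset_closure hn
      by_cases he : eB 𝒜 = 0
      · rw [odiv, if_pos he]
        refine hd.2 1 (NRproof.NR_of_verZ_eq le_rfl (NRproof.verZ_eq_of ?_) hd.1) (one_dvd d)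
        intro n hn
        have := hdeg n hn
        rw [he] at this
        have h0 : n = 0 := by simpa using this
        simp [h0]
      · rw [odiv, if_neg he]
        have hd0 : d ≠ 0 := by omega
        conv_rhs => rw [← Nat.prod_factorization_pow_eq_self hd0]
        rw [Finsupp.prod, Nat.support_factorization]
        refine Finset.prod_congr rfl ?_
        intro p hp
        rw [if_pos]
        by_contra hlt
        have hpp := Nat.prime_of_mem_primeFactors hp
        have hpd := Nat.dvd_of_mem_primeFactors hp
        push Not at hlt
        have hpos : 1 ≤ d / p := Nat.div_pos (Nat.le_of_dvd hd1 hpd) hpp.pos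
        have hmul : d / p * p = d := Nat.div_mul_cancel hpd
        have key : d / p ∈ NRset 𝒜 := by
          refine NRproof.NR_of_verZ_eq hpos (NRproof.verZ_eq_of ?_) hd.1
          intro n hn
          constructor
          · intro hdn
            refine dvd_trans ?_ hdn
            exact_mod_cast Nat.div_dvd_of_dvd hpd
          · intro hdn
            have hen := hdeg n hn
            by_cases hn0 : n = 0
            · simp [hn0]
            have hna : n.natAbs ≠ 0 := by simpa using hn0
            rw [Int.natCast_dvd] at *
            rw [← Nat.factorization_le_iff_dvd (by omega) hna] at hdn hen
            rw [← Nat.factorization_le_iff_dvd hd0 hna]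
            intro q
            by_cases hqp : q = p
            · subst hqp; exact hlt.trans (hen q)
            · refine le_trans (le_of_eq ?_) (hdn q)
              rw [Nat.factorization_div hpd, Finsupp.tsub_apply, hpp.factorization,
                Finsupp.single_eq_of_ne hqp, Nat.sub_zero]
        have := hd.2 _ key (Nat.div_dvd_of_dvd hpd)
        rw [this] at hmul
        have h2 := hpp.two_le
        nlinarith
end
end

section
/- Let k be a field of characteristic 0 and B a ℤ-graded normal affine k-domain. If B is saturated in codimension 1 (i.e. ē(B) = e(B)), then NR(B) = ∅ or NR(B) = { d ∈ ℕ : d ≥ 1 }; in other words, either B^{(d)} is rigid for every d ≥ 1, or B^{(d)} is non-rigid for every d ≥ 1. -/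
noncomputable section

section LNDlemmas

variable {R : Type*} [CommRing R]

theorem lnd_iter_leibniz (D : Derivation ℤ R R) (n : ℕ) (x y : R) :
    (⇑D)^[n] (x * y) = ∑ ij ∈ Finset.HasAntidiagonal.antidiagonal n,
      (n.choose ij.1 : R) * ((⇑D)^[ij.1] x * (⇑D)^[ij.2] y) := by
  induction n with
  | zero => simp
  | succ n ih =>
    rw [Function.iterate_succ_apply', ih, map_sum]
    rw [Finset.sum_antidiagonal_choose_succ_mul (fun i j => (⇑D)^[i] x * (⇑D)^[j] y) n]
    rw [← Finset.sum_add_distrib]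
    refine Finset.sum_congr rfl fun ij hij => ?_
    rw [Finset.HasAntidiagonal.mem_antidiagonal] at hij
    have hc : n.choose ij.2 = n.choose ij.1 := by
      apply Nat.choose_symm_of_eq_add; omega
    rw [hc]
    simp only [Function.iterate_succ_apply', Derivation.leibniz, smul_eq_mul, Derivation.map_natCast]
    ring

/-- `x` has degree exactly `m` with respect to `D`. -/
def DegEq (D : Derivation ℤ R R) (x : R) (m : ℕ) : Prop :=
  (⇑D)^[m] x ≠ 0 ∧ (⇑D)^[m + 1] x = 0

theorem lnd_iter_zero_of_le (D : Derivation ℤ R R) {x : R} {m n : ℕ} (h : (⇑D)^[m] x = 0)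
    (hmn : m ≤ n) : (⇑D)^[n] x = 0 := by
  obtain ⟨c, rfl⟩ := Nat.exists_eq_add_of_le hmn
  rw [add_comm, Function.iterate_add_apply, h, iterate_map_zero]

theorem DegEq.unique {D : Derivation ℤ R R} {x : R} {m n : ℕ} (h : DegEq D x m)
    (h' : DegEq D x n) : m = n := by
  rcases lt_trichotomy m n with hlt | h1 | hlt
  · exact absurd (lnd_iter_zero_of_le D h.2 hlt) h'.1
  · exact h1
  · exact absurd (lnd_iter_zero_of_le D h'.2 hlt) h.1

theorem IsLND.exists_degEq {D : Derivation ℤ R R} (hD : IsLND D) {x : R} (hx : x ≠ 0) :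
    ∃ m, DegEq D x m := by
  classical
  have h : ∃ n, (⇑D)^[n] x = 0 := by
    obtain ⟨n, _, hn⟩ := hD x
    exact ⟨n, hn⟩
  have h0 : Nat.find h ≠ 0 := by
    intro h0
    have := Nat.find_spec h
    rw [h0] at this
    exact hx this
  obtain ⟨m, hm⟩ := Nat.exists_eq_succ_of_ne_zero h0
  refine ⟨m, Nat.find_min h (by omega), ?_⟩
  have := Nat.find_spec h
  rwa [hm] at this

variable [IsDomain R] [CharZero R]

theorem DegEq.mul {D : Derivation ℤ R R} {x y : R} {m n : ℕ} (hx : DegEq D x m)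
    (hy : DegEq D y n) : DegEq D (x * y) (m + n) := by
  constructor
  · rw [lnd_iter_leibniz, Finset.sum_eq_single (m, n)]
    · refine mul_ne_zero ?_ (mul_ne_zero hx.1 hy.1)
      exact Nat.cast_ne_zero.2 (Nat.choose_pos (Nat.le_add_right _ _)).ne'
    · rintro ⟨i, j⟩ hij hne
      simp only [Finset.HasAntidiagonal.mem_antidiagonal] at hij
      rcases lt_or_ge m i with h | h
      · simp [lnd_iter_zero_of_le D hx.2 h]
      · have : n < j := by
          rcases eq_or_lt_of_le h with h | h
          · exact absurd (by ext <;> simp <;> omega) hne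
          · omega
        simp [lnd_iter_zero_of_le D hy.2 this]
    · intro h
      simp at h
  · rw [lnd_iter_leibniz]
    refine Finset.sum_eq_zero ?_
    rintro ⟨i, j⟩ hij
    simp only [Finset.HasAntidiagonal.mem_antidiagonal] at hij
    rcases lt_or_ge m i with h | h
    · simp [lnd_iter_zero_of_le D hx.2 h]
    · have : n < j := by omega
      simp [lnd_iter_zero_of_le D hy.2 this]

theorem DegEq.natCast (D : Derivation ℤ R R) {n : ℕ} (hn : n ≠ 0) : DegEq D (n : R) 0 := by
  constructor
  · simpa using hn
  · simp

theorem DegEq.pow {D : Derivation ℤ R R} {x : R} {m : ℕ} (hx : DegEq D x m) (n : ℕ) :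
    DegEq D (x ^ n) (n * m) := by
  induction n with
  | zero => simpa using DegEq.natCast D one_ne_zero
  | succ n ih =>
    rw [pow_succ, Nat.succ_mul]
    exact ih.mul hx

theorem DegEq.der {D : Derivation ℤ R R} {x : R} {m : ℕ} (hx : DegEq D x (m + 1)) :
    DegEq D (D x) m := by
  constructor
  · have := hx.1
    rwa [Function.iterate_succ_apply] at this
  · have := hx.2
    rwa [Function.iterate_succ_apply] at this

/-- The kernel of a locally nilpotent derivation is factorially closed. -/
theorem IsLND.factClosed {D : Derivation ℤ R R} (hD : IsLND D) {x y : R} (hxy : x * y ≠ 0)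
    (h : D (x * y) = 0) : D x = 0 := by
  obtain ⟨m, hm⟩ := hD.exists_degEq (left_ne_zero_of_mul hxy)
  obtain ⟨n, hn⟩ := hD.exists_degEq (right_ne_zero_of_mul hxy)
  have h0 : DegEq D (x * y) 0 := ⟨by simpa using hxy, by simpa using h⟩
  have := (hm.mul hn).unique h0
  obtain rfl : m = 0 := by omega
  simpa using hm.2

theorem IsLND.unit {D : Derivation ℤ R R} (hD : IsLND D) {x : R} (hx : IsUnit x) : D x = 0 := by
  obtain ⟨y, hy⟩ := hx.exists_right_inv
  exact hD.factClosed (y := y) (by simp [hy]) (by simp [hy])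

theorem lnd_iter_const_mul (D : Derivation ℤ R R) {a : R} (ha : D a = 0) (n : ℕ) (x : R) :
    (⇑D)^[n] (a * x) = a * (⇑D)^[n] x := by
  induction n with
  | zero => simp
  | succ n ih =>
    rw [Function.iterate_succ_apply', ih, Function.iterate_succ_apply', Derivation.leibniz, ha]
    simp

theorem lnd_iter_slice_pow (D : Derivation ℤ R R) {s : R} (h : D (D s) = 0) (n : ℕ) :
    (⇑D)^[n] (s ^ n) = (n.factorial : R) * (D s) ^ n := by
  induction n with
  | zero => simp
  | succ n ih =>
    rw [Function.iterate_succ_apply, Derivation.leibniz_pow]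
    have : (n + 1) • s ^ (n + 1 - 1) • D s = (((n + 1 : ℕ) : R) * D s) * s ^ n := by
      simp only [nsmul_eq_mul, smul_eq_mul, Nat.add_sub_cancel]; ring
    rw [this, lnd_iter_const_mul, ih, Nat.factorial_succ]
    · push_cast; ring
    · simp [Derivation.leibniz, h]

end LNDlemmas

section CommAlg

variable {B : Type*} [CommRing B] [IsDomain B]

theorem dvd_of_ideal_stable_aux (K : Type*) [Field K] [Algebra B K] [IsFractionRing B K] [IsIntegrallyClosed B] [IsNoetherianRing B] {f z : B} (hf : f ≠ 0)
    (I : Ideal B) (hI : I ≠ ⊥) (h : ∀ c ∈ I, ∃ w ∈ I, z * c = f * w) : f ∣ z := by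
  let N : Submodule B K := Submodule.map (Algebra.linearMap B K) I
  have hfK : algebraMap B K f ≠ 0 := by
    simpa using hf
  have hint : IsIntegral B (algebraMap B K z / algebraMap B K f) := by
    refine isIntegral_of_smul_mem_submodule N ?_ ?_ _ ?_
    · intro hN
      apply hI
      rw [eq_bot_iff]
      intro x hx
      have h1 : algebraMap B K x ∈ N := ⟨x, hx, rfl⟩
      rw [hN] at h1
      simpa using h1
    · exact Submodule.FG.map _ (IsNoetherian.noetherian I)
    · rintro _ ⟨c, hc, rfl⟩
      obtain ⟨w, hw, hzw⟩ := h c hc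
      refine ⟨w, hw, ?_⟩
      simp only [Algebra.linearMap_apply, smul_eq_mul]
      have := congrArg (algebraMap B K) hzw
      simp only [map_mul] at this
      field_simp
      linear_combination -this
  obtain ⟨y, hy⟩ := IsIntegrallyClosed.isIntegral_iff.1 hint
  refine ⟨y, ?_⟩
  apply IsFractionRing.injective B K
  rw [map_mul, hy]
  field_simp

theorem dvd_of_ideal_stable [IsIntegrallyClosed B] [IsNoetherianRing B] {f z : B} (hf : f ≠ 0)
    (I : Ideal B) (hI : I ≠ ⊥) (h : ∀ c ∈ I, ∃ w ∈ I, z * c = f * w) : f ∣ z :=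
  dvd_of_ideal_stable_aux (FractionRing B) hf I hI h

theorem exists_heightOne_of_not_dvd [IsIntegrallyClosed B] [IsNoetherianRing B] {f y : B}
    (hf : f ≠ 0) (hy : ¬ f ∣ y) :
    ∃ P : Ideal B, heightOne P ∧ f ∈ P ∧ ∀ c, f ∣ c * y → c ∈ P := by
  let C : B → Ideal B := fun z =>
    { carrier := {c | f ∣ c * z}
      add_mem' := fun {a b} ha hb => by
        change f ∣ (a + b) * z
        rw [add_mul]; exact dvd_add ha hb
      zero_mem' := by change f ∣ 0 * z; simp
      smul_mem' := fun a b hb => by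
        change f ∣ (a * b) * z
        rw [mul_assoc]; exact Dvd.dvd.mul_left hb a }
  have hC : ∀ z c, c ∈ C z ↔ f ∣ c * z := fun z c => Iff.rfl
  obtain ⟨P, ⟨z, hz, hyz, rfl⟩, hmax⟩ := set_has_maximal_iff_noetherian.mpr ‹IsNoetherianRing B›
    { P : Ideal B | ∃ z, ¬ f ∣ z ∧ C y ≤ C z ∧ P = C z } ⟨C y, y, hy, le_rfl, rfl⟩
  have hprime : (C z).IsPrime := by
    refine ⟨?_, ?_⟩
    · intro h
      have : (1 : B) ∈ C z := by rw [h]; trivial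
      rw [hC, one_mul] at this
      exact hz this
    · intro a b hab
      rw [or_iff_not_imp_left]
      intro ha
      rw [hC] at hab ha
      have hle : C z ≤ C (a * z) := by
        intro c hc
        rw [hC] at hc ⊢
        rw [mul_left_comm]
        exact Dvd.dvd.mul_left hc a
      have := hmax (C (a * z)) ⟨a * z, ha, hyz.trans hle, rfl⟩
      have heq : C z = C (a * z) := by
        by_contra hne
        exact this (lt_of_le_of_ne hle hne)
      rw [heq, hC]
      rwa [← mul_assoc, mul_comm b a]
  have hfP : f ∈ C z := by rw [hC]; exact dvd_mul_right f z
  have hPne : C z ≠ ⊥ := by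
    intro h
    rw [h] at hfP
    exact hf (by simpa using hfP)
  refine ⟨C z, ⟨hprime, ⟨⊥, Ideal.isPrime_bot, bot_lt_iff_ne_bot.2 hPne⟩, ?_⟩, hfP,
    fun c hc => hyz hc⟩
  intro q r hq hr hqr hrP
  have hrne : r ≠ ⊥ := fun h => by
    rw [h] at hqr
    exact not_lt_bot hqr
  -- some element of P is sent outside P
  obtain ⟨π, hπ, w, hw, hwP⟩ : ∃ π ∈ C z, ∃ w, z * π = f * w ∧ w ∉ C z := by
    by_contra hcon
    push Not at hcon
    apply hz
    refine dvd_of_ideal_stable hf (C z) hPne ?_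
    intro c hc
    obtain ⟨w, hw⟩ := (hC z c).1 hc
    rw [mul_comm] at hw
    exact ⟨w, hcon c hc w hw, hw⟩
  have key : ∀ c w', z * c = f * w' → w * c = w' * π := by
    intro c w' h
    apply mul_left_cancel₀ hf
    linear_combination π * h - c * hw
  have hπr : π ∉ r := by
    intro hπr
    apply hrP.not_ge
    intro c hc
    obtain ⟨w', hw'⟩ := (hC z c).1 hc
    rw [mul_comm] at hw'
    have h1 : w * c ∈ r := by
      rw [key c w' hw']
      exact r.mul_mem_left _ hπr
    exact (hr.mem_or_mem h1).resolve_left fun h => hwP (hrP.le h)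
  apply hz
  refine dvd_of_ideal_stable hf r hrne ?_
  intro c hc
  obtain ⟨w', hw'⟩ := (hC z c).1 (hrP.le hc)
  rw [mul_comm] at hw'
  refine ⟨w', ?_, hw'⟩
  have h1 : w' * π ∈ r := by
    rw [← key c w' hw']
    exact r.mul_mem_left _ hc
  exact (hr.mem_or_mem h1).resolve_right hπr

theorem heightOne_of_minimalPrimes [IsNoetherianRing B] {s : B} (hs : s ≠ 0) {p : Ideal B}
    (hp : p ∈ (Ideal.span {s}).minimalPrimes) : heightOne p := by
  have hprime : p.IsPrime := hp.1.1
  have hsp : s ∈ p := hp.1.2 (Ideal.mem_span_singleton_self s)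
  have hpne : p ≠ ⊥ := by
    rintro rfl
    exact hs (by simpa using hsp)
  refine ⟨hprime, ⟨⊥, Ideal.isPrime_bot, bot_lt_iff_ne_bot.2 hpne⟩, ?_⟩
  intro q r hq hr hqr hrp
  have h1 := Ideal.height_le_one_of_isPrincipal_of_mem_minimalPrimes _ p hp
  have h2 := Ideal.height_strict_mono_of_isPrime_of_isPrime hqr
  have h3 := Ideal.height_strict_mono_of_isPrime_of_isPrime hrp
  have h4 : r.height < 1 := h3.trans_le h1
  rw [Order.lt_one_iff] at h4
  rw [h4] at h2
  exact not_lt_zero' h2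

theorem homogHt1_of_heightOne (𝒜 : ℤ → AddSubgroup B) [GradedRing 𝒜] {p : Ideal B}
    (hp : heightOne p) {f : B} (hf : f ≠ 0) (hfp : f ∈ p) {i : ℤ} (hfi : f ∈ 𝒜 i) :
    p ∈ homogHt1 𝒜 := by
  refine ⟨hp, ?_⟩
  have h1 : (p.homogeneousCore 𝒜).toIdeal.IsPrime := Ideal.IsPrime.homogeneousCore hp.1
  have h2 : (p.homogeneousCore 𝒜).toIdeal ≤ p := Ideal.toIdeal_homogeneousCore_le 𝒜 p
  have h3 : f ∈ (p.homogeneousCore 𝒜).toIdeal :=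
    Ideal.mem_homogeneousCore_of_homogeneous_of_mem ⟨i, hfi⟩ hfp
  have h4 : (p.homogeneousCore 𝒜).toIdeal = p := by
    by_contra hne
    refine hp.2.2 ⊥ _ Ideal.isPrime_bot h1 (bot_lt_iff_ne_bot.2 ?_) (lt_of_le_of_ne h2 hne)
    intro h
    rw [h] at h3
    exact hf (by simpa using h3)
  apply le_antisymm
  · conv_lhs => rw [← h4]
    change Ideal.span _ ≤ _
    refine Ideal.span_mono ?_
    rintro _ ⟨x, hx, rfl⟩
    exact ⟨hx, x.2⟩
  · rw [Ideal.span_le]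
    exact fun x hx => hx.1

end CommAlg

section Ext

open TensorProduct

theorem exists_der_ext (R K : Type*) [CommRing R] [IsDomain R] [Field K] [CharZero K]
    [Algebra R K] [FaithfulSMul R K] [Algebra.IsAlgebraic R K] (D : Derivation ℤ R R) :
    ∃ E : Derivation ℤ K K, ∀ r : R, E (algebraMap R K r) = algebraMap R K (D r) := by
  let L := FractionRing R
  let _ : Algebra L K := FractionRing.liftAlgebra R K
  have : IsScalarTower R L K := FractionRing.isScalarTower_liftAlgebra R K
  have : Algebra.IsAlgebraic L K :=
    (IsFractionRing.comap_isAlgebraic_iff (A := R) (K := L) (C := K)).1 inferInstance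
  have : CharZero L := RingHom.charZero (algebraMap L K)
  have : Algebra.FormallyEtale R L := Algebra.FormallyEtale.of_isLocalization (nonZeroDivisors R)
  have : Algebra.FormallyEtale L K := Algebra.FormallyEtale.of_isSeparable L K
  have : Algebra.FormallyEtale R K := Algebra.FormallyEtale.comp R L K
  let D0 : Derivation ℤ R K := (Algebra.linearMap R K).compDer D
  let F : K ⊗[R] (Ω[R⁄ℤ]) →ₗ[K] K := LinearMap.liftBaseChange K D0.liftKaehlerDifferential
  let e := KaehlerDifferential.tensorKaehlerEquivOfFormallyEtale ℤ R K
  let G : Ω[K⁄ℤ] →ₗ[K] K := F ∘ₗ e.symm.toLinearMap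
  refine ⟨G.compDer (KaehlerDifferential.D ℤ K), fun r => ?_⟩
  change F (e.symm (KaehlerDifferential.D ℤ K (algebraMap R K r))) = _
  rw [KaehlerDifferential.tensorKaehlerEquivOfFormallyEtale_symm_D_algebraMap]
  simp [F, D0]

end Ext

section Ver

variable {B : Type*} [CommRing B] (𝒜 : ℤ → AddSubgroup B) [GradedRing 𝒜]

open DirectSum

@[elab_as_elim]
theorem graded_induction {motive : B → Prop} (x : B) (h0 : motive 0)
    (hom : ∀ i, ∀ x ∈ 𝒜 i, motive x) (hadd : ∀ x y, motive x → motive y → motive (x + y)) :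
    motive x :=
  DirectSum.Decomposition.inductionOn 𝒜 h0 (fun {i} m => hom i m m.2) hadd x

theorem mem_verZ_of_mem {d : ℕ} {i : ℤ} (hi : (d : ℤ) ∣ i) {x : B} (hx : x ∈ 𝒜 i) :
    x ∈ verZ 𝒜 d := by
  apply Subring.subset_closure
  simp only [Set.mem_iUnion]
  exact ⟨i, Int.mem_zmultiples_iff.2 hi, hx⟩

theorem pow_mem_verZ {d : ℕ} {i : ℤ} {x : B} (hx : x ∈ 𝒜 i) : x ^ d ∈ verZ 𝒜 d := by
  refine mem_verZ_of_mem 𝒜 (i := d • i) ?_ (SetLike.pow_mem_graded d hx)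
  simp

@[elab_as_elim]
theorem verZ_induction {d : ℕ} {motive : B → Prop} (x : B) (hx : x ∈ verZ 𝒜 d)
    (hom : ∀ i, (d : ℤ) ∣ i → ∀ x ∈ 𝒜 i, motive x)
    (hadd : ∀ x y, motive x → motive y → motive (x + y))
    (hneg : ∀ x, motive x → motive (-x))
    (hmul : ∀ x ∈ verZ 𝒜 d, ∀ y ∈ verZ 𝒜 d, motive x → motive y → motive (x * y)) :
    motive x := by
  induction hx using Subring.closure_induction with
  | mem x hx =>
    simp only [Set.mem_iUnion] at hx
    obtain ⟨i, hi, hx⟩ := hx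
    exact hom i (Int.mem_zmultiples_iff.1 hi) x hx
  | zero => exact hom 0 (dvd_zero _) 0 (zero_mem _)
  | one => exact hom 0 (dvd_zero _) 1 SetLike.GradedOne.one_mem
  | add x y _ _ h1 h2 => exact hadd x y h1 h2
  | neg x _ h => exact hneg x h
  | mul x y hx hy h1 h2 => exact hmul x hx y hy h1 h2

open Classical in
/-- Projection onto the Veronese subring. -/
def verProj (d : ℕ) : B →+ B :=
  (DirectSum.toAddMonoid (fun i : ℤ => if (d : ℤ) ∣ i then (𝒜 i).subtype else 0)).comp
    (DirectSum.decomposeAddEquiv 𝒜).toAddMonoidHom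

open Classical in
theorem verProj_of_mem (d : ℕ) {i : ℤ} {x : B} (hx : x ∈ 𝒜 i) :
    verProj 𝒜 d x = if (d : ℤ) ∣ i then x else 0 := by
  simp only [verProj, AddMonoidHom.comp_apply]
  change DirectSum.toAddMonoid _ (decompose 𝒜 x) = _
  rw [DirectSum.decompose_of_mem 𝒜 hx, DirectSum.toAddMonoid_of]
  split_ifs <;> simp

theorem verProj_mem (d : ℕ) (x : B) : verProj 𝒜 d x ∈ verZ 𝒜 d := by
  refine graded_induction 𝒜 x (by simp [zero_mem]) ?_ ?_
  · intro i x hx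
    rw [verProj_of_mem 𝒜 d hx]
    split_ifs with h
    · exact mem_verZ_of_mem 𝒜 h hx
    · exact zero_mem _
  · intro x y hx hy
    rw [map_add]
    exact add_mem hx hy

theorem verProj_mul (d : ℕ) {f : B} (hf : f ∈ verZ 𝒜 d) (y : B) :
    verProj 𝒜 d (f * y) = f * verProj 𝒜 d y := by
  revert y
  refine verZ_induction 𝒜 f hf ?_ ?_ ?_ ?_
  · intro i hi f hf y
    refine graded_induction 𝒜 y (by simp) ?_ ?_
    · intro j y hy
      rw [verProj_of_mem 𝒜 d hy, verProj_of_mem 𝒜 d (SetLike.mul_mem_graded hf hy)]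
      simp [(Int.dvd_add_right hi : (d : ℤ) ∣ i + j ↔ _)]
    · intro x y hx hy
      rw [mul_add, map_add, map_add, hx, hy, mul_add]
  · intro a b ha hb y
    rw [add_mul, map_add, ha, hb, add_mul]
  · intro a ha y
    rw [neg_mul, map_neg, ha, neg_mul]
  · intro a _ b _ ha hb y
    rw [mul_assoc, ha, hb, mul_assoc]

theorem verProj_of_mem_verZ (d : ℕ) {f : B} (hf : f ∈ verZ 𝒜 d) : verProj 𝒜 d f = f := by
  have h := verProj_mul 𝒜 d hf 1
  rw [verProj_of_mem 𝒜 d (SetLike.GradedOne.one_mem)] at h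
  simpa using h

theorem mem_verZ_of_mul_mem [IsDomain B] {d : ℕ} {f y : B} (hf : f ∈ verZ 𝒜 d) (hf0 : f ≠ 0)
    (h : f * y ∈ verZ 𝒜 d) : y ∈ verZ 𝒜 d := by
  have h1 := verProj_of_mem_verZ 𝒜 d h
  rw [verProj_mul 𝒜 d hf] at h1
  rw [← mul_left_cancel₀ hf0 h1]
  exact verProj_mem 𝒜 d y

theorem verZ_isIntegral {d : ℕ} (hd : 1 ≤ d) : Algebra.IsIntegral (verZ 𝒜 d) B := by
  refine ⟨fun x => ?_⟩
  refine graded_induction 𝒜 x isIntegral_zero ?_ fun _ _ => IsIntegral.add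
  intro i x hx
  refine IsIntegral.of_pow hd ?_
  exact isIntegral_algebraMap (x := (⟨x ^ d, pow_mem_verZ 𝒜 hx⟩ : verZ 𝒜 d))

theorem exists_sub_of_mem_Mbar {p : Ideal B} (hp : p.IsPrime) {i : ℤ} (hi : i ∈ Mbar 𝒜 p) :
    ∃ j l : ℤ, ∃ u ∈ 𝒜 j, ∃ v ∈ 𝒜 l, u ∉ p ∧ v ∉ p ∧ i = j - l := by
  have h1 : (1 : B) ∉ p := fun h => hp.ne_top ((Ideal.eq_top_iff_one p).2 h)
  have h0 : (1 : B) ∈ 𝒜 0 := SetLike.GradedOne.one_mem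
  induction hi using AddSubgroup.closure_induction with
  | mem i hi =>
    obtain ⟨u, hu, hup⟩ := Set.not_subset.1 hi
    exact ⟨i, 0, u, hu, 1, h0, hup, h1, by simp⟩
  | zero => exact ⟨0, 0, 1, h0, 1, h0, h1, h1, by simp⟩
  | add i i' _ _ h h' =>
    obtain ⟨j, l, u, hu, v, hv, hup, hvp, rfl⟩ := h
    obtain ⟨j', l', u', hu', v', hv', hup', hvp', rfl⟩ := h'
    refine ⟨j + j', l + l', u * u', SetLike.mul_mem_graded hu hu', v * v',
      SetLike.mul_mem_graded hv hv', ?_, ?_, by ring⟩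
    · exact fun h => (hp.mem_or_mem h).elim hup hup'
    · exact fun h => (hp.mem_or_mem h).elim hvp hvp'
  | neg i _ h =>
    obtain ⟨j, l, u, hu, v, hv, hup, hvp, rfl⟩ := h
    exact ⟨l, j, v, hv, u, hu, hvp, hup, by ring⟩

end Ver

section Up

variable {B : Type*} [CommRing B] [IsDomain B] (𝒜 : ℤ → AddSubgroup B) [GradedRing 𝒜]

/-- A derivation into a field, evaluated on a homogeneous element, stays in `B`. -/
theorem ext_hom_mem [IsIntegrallyClosed B] [IsNoetherianRing B] [CharZero B]
    (hunit : ∀ n : ℕ, n ≠ 0 → IsUnit (n : B))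
    (hs : ∀ p ∈ homogHt1 𝒜, Gsub 𝒜 ≤ Mbar 𝒜 p)
    (K : Type*) [Field K] [Algebra B K] [IsFractionRing B K] {m : ℕ}
    (E : Derivation ℤ K K)
    (hE : ∀ r ∈ verZ 𝒜 (m + 1), ∃ r' ∈ verZ 𝒜 (m + 1), E (algebraMap B K r) = algebraMap B K r')
    {i : ℤ} {b : B} (hb : b ∈ 𝒜 i) : ∃ b' : B, E (algebraMap B K b) = algebraMap B K b' := by
  by_cases hb0 : b = 0
  · exact ⟨0, by simp [hb0]⟩
  have hinj : Function.Injective (algebraMap B K) := IsFractionRing.injective B K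
  have hpow : ∀ j, ∀ x ∈ 𝒜 j, ∃ y : B, ((m + 1 : ℕ) : K) * (algebraMap B K x) ^ m *
      E (algebraMap B K x) = algebraMap B K y := by
    intro j x hx
    obtain ⟨y, _, hy⟩ := hE _ (pow_mem_verZ 𝒜 (d := m + 1) hx)
    refine ⟨y, ?_⟩
    rw [← hy, map_pow, Derivation.leibniz_pow]
    simp only [nsmul_eq_mul, smul_eq_mul, Nat.add_sub_cancel]
    ring
  obtain ⟨y, hy⟩ := hpow i b hb
  set f : B := ((m + 1 : ℕ) : B) * b ^ m with hf
  have hm0 : ((m + 1 : ℕ) : B) ≠ 0 := Nat.cast_ne_zero.2 (Nat.succ_ne_zero m)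
  have hf0 : f ≠ 0 := mul_ne_zero hm0 (pow_ne_zero _ hb0)
  have hfi : f ∈ 𝒜 (m • i) := by
    rw [hf, ← nsmul_eq_mul]
    exact nsmul_mem (SetLike.pow_mem_graded m hb) _
  have hfE : algebraMap B K f * E (algebraMap B K b) = algebraMap B K y := by
    rw [← hy, hf]
    simp
  have hfK : algebraMap B K f ≠ 0 := fun h => hf0 (hinj (by simpa using h))
  by_cases hdvd : f ∣ y
  · obtain ⟨w, rfl⟩ := hdvd
    refine ⟨w, mul_left_cancel₀ hfK ?_⟩
    rw [hfE, map_mul]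
  exfalso
  obtain ⟨P, hP, hfP, hPc⟩ := exists_heightOne_of_not_dvd hf0 hdvd
  have hPh := homogHt1_of_heightOne 𝒜 hP hf0 hfP hfi
  have hi : i ∈ Gsub 𝒜 := by
    refine AddSubgroup.subset_closure ?_
    intro h
    rw [h] at hb
    exact hb0 (by simpa using hb)
  obtain ⟨j, l, u, hu, v, hv, huP, hvP, hijl⟩ := exists_sub_of_mem_Mbar 𝒜 hP.1 (hs P hPh hi)
  have hr : b * v * u ^ m ∈ verZ 𝒜 (m + 1) := by
    refine mem_verZ_of_mem 𝒜 (i := i + l + m • j) ?_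
      (SetLike.mul_mem_graded (SetLike.mul_mem_graded hb hv) (SetLike.pow_mem_graded m hu))
    refine ⟨j, ?_⟩
    rw [hijl]
    push_cast
    simp only [nsmul_eq_mul]
    ring
  obtain ⟨r', _, hr'⟩ := hE _ hr
  obtain ⟨v', hv'⟩ := hpow l v hv
  obtain ⟨u', hu'⟩ := hpow j u hu
  have hc : ((m + 1 : ℕ) : B) * v ^ (m + 1) * u ^ (m + 1) ∈ P := by
    apply hPc
    refine ⟨((m + 1 : ℕ) : B) * v ^ m * u * r' - b * u ^ (m + 1) * v' - b * v ^ (m + 1) * m * u', ?_⟩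
    apply hinj
    simp only [map_mul, map_sub, map_pow, map_natCast, Derivation.leibniz, smul_eq_mul,
      Derivation.leibniz_pow, nsmul_eq_mul] at hr' ⊢
    rw [← hfE, ← hr', ← hv', ← hu']
    cases m with
    | zero => simp; ring
    | succ m =>
      simp only [Nat.add_sub_cancel]
      push_cast
      ring
  have h1 := hP.1.mem_or_mem hc
  rcases h1 with h1 | h1
  · rcases hP.1.mem_or_mem h1 with h2 | h2
    · exact hP.1.ne_top (Ideal.eq_top_of_isUnit_mem _ h2 (hunit _ (Nat.succ_ne_zero m)))
    · exact hvP (hP.1.mem_of_pow_mem _ h2)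
  · exact huP (hP.1.mem_of_pow_mem _ h1)

theorem exists_ext_der [IsIntegrallyClosed B] [IsNoetherianRing B] [CharZero B]
    (hunit : ∀ n : ℕ, n ≠ 0 → IsUnit (n : B))
    (hs : ∀ p ∈ homogHt1 𝒜, Gsub 𝒜 ≤ Mbar 𝒜 p) {d : ℕ} (hd : 1 ≤ d)
    (D : Derivation ℤ (verZ 𝒜 d) (verZ 𝒜 d)) :
    ∃ D' : Derivation ℤ B B, ∀ r : verZ 𝒜 d, D' (r : B) = (D r : B) := by
  obtain ⟨m, rfl⟩ : ∃ m, d = m + 1 := ⟨d - 1, by omega⟩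
  let K := FractionRing B
  have hinj : Function.Injective (algebraMap B K) := IsFractionRing.injective B K
  have hint := verZ_isIntegral 𝒜 hd
  have : CharZero K := charZero_of_injective_algebraMap hinj
  have : Algebra.IsAlgebraic (verZ 𝒜 (m + 1)) K := by
    have : Algebra.IsAlgebraic B K := IsLocalization.isAlgebraic K (nonZeroDivisors B)
    exact Algebra.IsIntegral.trans_isAlgebraic _ B K
  have : FaithfulSMul (verZ 𝒜 (m + 1)) K := by
    rw [faithfulSMul_iff_algebraMap_injective]
    exact hinj.comp Subtype.val_injective
  obtain ⟨E, hE⟩ := exists_der_ext (verZ 𝒜 (m + 1)) K D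
  have hE' : ∀ r : verZ 𝒜 (m + 1), E (algebraMap B K r) = algebraMap B K (D r) := hE
  have hall : ∀ b : B, ∃ b' : B, E (algebraMap B K b) = algebraMap B K b' := by
    intro b
    refine graded_induction 𝒜 b ⟨0, by simp⟩ ?_ ?_
    · intro i x hx
      exact ext_hom_mem 𝒜 hunit hs K E (fun r hr => ⟨D ⟨r, hr⟩, (D ⟨r, hr⟩).2, hE' ⟨r, hr⟩⟩) hx
    · rintro x y ⟨x', hx⟩ ⟨y', hy⟩
      exact ⟨x' + y', by simp [hx, hy]⟩
  choose g hg using hall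
  let gl : B →+ B := AddMonoidHom.mk' g (by
    intro a b
    apply hinj
    rw [← hg, map_add, map_add, map_add, hg, hg])
  refine ⟨Derivation.mk' gl.toIntLinearMap ?_, ?_⟩
  · intro a b
    apply hinj
    change algebraMap B K (g (a * b)) = algebraMap B K (a * g b + b * g a)
    rw [← hg]
    simp [hg]
  · intro r
    apply hinj
    change algebraMap B K (g r) = _
    rw [← hg, hE']

theorem ext_isLND [CharZero B] {d : ℕ} (hd : 1 ≤ d)
    {D : Derivation ℤ (verZ 𝒜 d) (verZ 𝒜 d)} (hD : IsLND D) {D' : Derivation ℤ B B}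
    (h : ∀ r : verZ 𝒜 d, D' (r : B) = (D r : B)) : IsLND D' := by
  obtain ⟨e, rfl⟩ : ∃ e, d = e + 1 := ⟨d - 1, by omega⟩
  have : CharZero (verZ 𝒜 (e + 1)) :=
    ⟨fun a b hab => by
      have := congrArg (Subtype.val) hab
      simpa using this⟩
  have key : ∀ m : ℕ, ∀ b : B, ∀ r : verZ 𝒜 (e + 1), b ^ (e + 1) = r → DegEq D r m →
      ∃ n : ℕ, (⇑D')^[n] b = 0 := by
    intro m
    induction m using Nat.strong_induction_on with
    | _ m ih =>
      intro b r hbr hr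
      have hr0 : r ≠ 0 := by
        rintro rfl
        exact hr.1 (iterate_map_zero _ _)
      have hb0 : b ≠ 0 := by
        rintro rfl
        apply hr0
        ext
        rw [← hbr]
        simp
      by_cases hy0 : D' b = 0
      · exact ⟨1, by simpa using hy0⟩
      have h1 : ((e + 1 : ℕ) : B) * b ^ e * D' b = (D r : B) := by
        rw [← h, ← hbr, Derivation.leibniz_pow]
        simp only [nsmul_eq_mul, smul_eq_mul, Nat.add_sub_cancel]
        ring
      have h2 : (((((e + 1 : ℕ) : verZ 𝒜 (e + 1)) ^ (e + 1) * r ^ e : verZ 𝒜 (e + 1))) : B) *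
          (D' b) ^ (e + 1) = ((D r ^ (e + 1) : verZ 𝒜 (e + 1)) : B) := by
        simp only [Subring.coe_mul, Subring.coe_pow, Subring.coe_natCast]
        rw [← h1, ← hbr, mul_pow, mul_pow]
        ring
      have hc0 : (((e + 1 : ℕ) : verZ 𝒜 (e + 1)) ^ (e + 1) * r ^ e : verZ 𝒜 (e + 1)) ≠ 0 :=
        mul_ne_zero (pow_ne_zero _ (Nat.cast_ne_zero.2 (Nat.succ_ne_zero e))) (pow_ne_zero _ hr0)
      have hyR : (D' b) ^ (e + 1) ∈ verZ 𝒜 (e + 1) := by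
        refine mem_verZ_of_mul_mem 𝒜 (Subtype.mem _) ?_ (h2 ▸ Subtype.mem _)
        intro h0
        exact hc0 (Subtype.ext h0)
      let r' : verZ 𝒜 (e + 1) := ⟨_, hyR⟩
      have hr'0 : r' ≠ 0 := by
        intro h0
        exact pow_ne_zero (e + 1) hy0 (congrArg Subtype.val h0)
      obtain ⟨m', hm'⟩ := hD.exists_degEq hr'0
      have h3 : ((e + 1 : ℕ) : verZ 𝒜 (e + 1)) ^ (e + 1) * r ^ e * r' = D r ^ (e + 1) :=
        Subtype.ext h2
      cases m with
      | zero =>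
        exfalso
        have : D r = 0 := by simpa using hr.2
        rw [this] at h3
        simp only [ne_eq, Nat.add_eq_zero_iff, one_ne_zero, and_false, not_false_eq_true,
          zero_pow] at h3
        exact (mul_ne_zero hc0 hr'0) h3
      | succ m =>
        have h4 := (((DegEq.natCast D (Nat.succ_ne_zero e)).pow (e + 1)).mul (hr.pow e)).mul hm'
        have h5 := hr.der.pow (e + 1)
        rw [← h3] at h5
        have h6 := h4.unique h5
        have h7 : m' < m + 1 := by
          by_contra hlt
          nlinarith
        obtain ⟨n, hn⟩ := ih m' h7 (D' b) r' rfl hm'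
        exact ⟨n + 1, by rwa [Function.iterate_succ_apply]⟩
  have main : ∀ b : B, ∃ n : ℕ, (⇑D')^[n] b = 0 := by
    intro b
    refine graded_induction 𝒜 b ⟨0, rfl⟩ ?_ ?_
    · intro i x hx
      by_cases hx0 : x = 0
      · exact ⟨0, hx0⟩
      let r : verZ 𝒜 (e + 1) := ⟨x ^ (e + 1), pow_mem_verZ 𝒜 hx⟩
      have hr0 : r ≠ 0 := fun h0 => pow_ne_zero (e + 1) hx0 (congrArg Subtype.val h0)
      obtain ⟨m, hm⟩ := hD.exists_degEq hr0
      exact key m x r rfl hm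
    · rintro x y ⟨n, hn⟩ ⟨n', hn'⟩
      refine ⟨max n n', ?_⟩
      rw [iterate_map_add, lnd_iter_zero_of_le D' hn (le_max_left _ _),
        lnd_iter_zero_of_le D' hn' (le_max_right _ _), add_zero]
  intro b
  obtain ⟨n, hn⟩ := main b
  exact ⟨n + 1, Nat.succ_pos n, lnd_iter_zero_of_le D' hn (Nat.le_succ n)⟩

end Up

section Homog

variable {B : Type*} [CommRing B] (𝒜 : ℤ → AddSubgroup B) [GradedRing 𝒜]

open DirectSum

open Classical in
theorem unit_isHomogeneous [IsDomain B] {x : B} (hx : IsUnit x) : ∃ i, x ∈ 𝒜 i := by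
  obtain ⟨y, hxy⟩ := hx.exists_right_inv
  have hx0 : x ≠ 0 := hx.ne_zero
  have hy0 : y ≠ 0 := by
    rintro rfl
    simp at hxy
  set X := (decompose 𝒜 x).support with hX
  set Y := (decompose 𝒜 y).support with hY
  have hXn : X.Nonempty := by
    rw [Finset.nonempty_iff_ne_empty]
    intro h
    apply hx0
    rw [← DirectSum.sum_support_decompose 𝒜 x, ← hX, h]
    simp
  have hYn : Y.Nonempty := by
    rw [Finset.nonempty_iff_ne_empty]
    intro h
    apply hy0
    rw [← DirectSum.sum_support_decompose 𝒜 y, ← hY, h]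
    simp
  by_cases hcard : X.card = 1
  · obtain ⟨i, hi⟩ := Finset.card_eq_one.1 hcard
    refine ⟨i, ?_⟩
    rw [← DirectSum.sum_support_decompose 𝒜 x, ← hX, hi]
    simp
  exfalso
  have hXc : 1 < X.card := by
    have := hXn.card_pos
    omega
  obtain ⟨p1, hp1, p2, hp2, hne, hu1, hu2⟩ :=
    TwoUniqueSums.uniqueAdd_of_one_lt_card (A := X) (B := Y)
      (by nlinarith [hYn.card_pos])
  have key : ∀ p ∈ X ×ˢ Y, UniqueAdd X Y p.1 p.2 → p.1 + p.2 = 0 := by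
    intro p hp hu
    rw [Finset.mem_product] at hp
    by_contra hsum
    have h1 : (decompose 𝒜 (x * y) (p.1 + p.2) : B) = 0 := by
      rw [hxy]
      exact DirectSum.decompose_of_mem_ne 𝒜 SetLike.GradedOne.one_mem (Ne.symm hsum)
    rw [DirectSum.decompose_mul, DirectSum.coe_mul_apply, Finset.sum_eq_single p] at h1
    · have h2 : decompose 𝒜 x p.1 ≠ 0 := DFinsupp.mem_support_iff.1 hp.1
      have h3 : decompose 𝒜 y p.2 ≠ 0 := DFinsupp.mem_support_iff.1 hp.2
      rcases mul_eq_zero.1 h1 with h | h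
      · exact h2 (Subtype.ext h)
      · exact h3 (Subtype.ext h)
    · intro q hq hqp
      exfalso
      apply hqp
      rw [Finset.mem_filter, Finset.mem_product] at hq
      have := hu hq.1.1 hq.1.2 hq.2
      exact Prod.ext this.1 this.2
    · intro h
      exfalso
      apply h
      rw [Finset.mem_filter, Finset.mem_product]
      exact ⟨hp, rfl⟩
  apply hne
  have h12 : p1.1 + p1.2 = p2.1 + p2.2 := by rw [key p1 hp1 hu1, key p2 hp2 hu2]
  rw [Finset.mem_product] at hp1
  have := hu2 hp1.1 hp1.2 h12
  exact Prod.ext this.1 this.2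

theorem algebraMap_mem_zero {k : Type*} [Field k] [Algebra k B] [IsDomain B] (c : k) :
    algebraMap k B c ∈ 𝒜 0 := by
  by_cases hc : c = 0
  · simp [hc, zero_mem]
  by_cases hc1 : c + 1 = 0
  · have : c = -1 := by linear_combination hc1
    rw [this, map_neg, map_one]
    exact neg_mem SetLike.GradedOne.one_mem
  have hu : IsUnit (algebraMap k B c) := (IsUnit.mk0 c hc).map _
  obtain ⟨i, hi⟩ := unit_isHomogeneous 𝒜 hu
  obtain ⟨j, hj⟩ := unit_isHomogeneous 𝒜 ((IsUnit.mk0 (c + 1) hc1).map (algebraMap k B))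
  by_cases hi0 : i = 0
  · rwa [hi0] at hi
  exfalso
  have h1 : (1 : B) ∈ 𝒜 0 := SetLike.GradedOne.one_mem
  rw [map_add, map_one] at hj
  by_cases hj0 : j = 0
  · have h2 := DirectSum.decompose_of_mem_ne 𝒜 hj (j := i) (by omega)
    rw [DirectSum.decompose_add, DirectSum.add_apply, AddSubgroup.coe_add,
      DirectSum.decompose_of_mem_same 𝒜 hi, DirectSum.decompose_of_mem_ne 𝒜 h1 (Ne.symm hi0),
      add_zero] at h2
    exact hu.ne_zero h2
  · have h2 := DirectSum.decompose_of_mem_ne 𝒜 hj (j := 0) (by omega)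
    rw [DirectSum.decompose_add, DirectSum.add_apply, AddSubgroup.coe_add,
      DirectSum.decompose_of_mem_ne 𝒜 hi hi0, DirectSum.decompose_of_mem_same 𝒜 h1,
      zero_add] at h2
    exact one_ne_zero h2

/-- The degree `T` homogeneous component of a derivation, as an additive map. -/
def homComp (D : Derivation ℤ B B) (T : ℤ) : B →+ B :=
  (DirectSum.toAddMonoid (fun i : ℤ => ((GradedRing.proj 𝒜 (i + T)).comp
    (D : B →ₗ[ℤ] B).toAddMonoidHom).comp (𝒜 i).subtype)).comp
    (DirectSum.decomposeAddEquiv 𝒜).toAddMonoidHom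

theorem homComp_of_mem (D : Derivation ℤ B B) (T : ℤ) {i : ℤ} {x : B} (hx : x ∈ 𝒜 i) :
    homComp 𝒜 D T x = (decompose 𝒜 (D x) (i + T) : B) := by
  simp only [homComp, AddMonoidHom.comp_apply]
  change DirectSum.toAddMonoid _ (decompose 𝒜 x) = _
  rw [DirectSum.decompose_of_mem 𝒜 hx, DirectSum.toAddMonoid_of]
  rfl

/-- The degree `T` homogeneous component of a derivation. -/
def homDer (D : Derivation ℤ B B) (T : ℤ) : Derivation ℤ B B :=
  Derivation.mk' (homComp 𝒜 D T).toIntLinearMap (by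
    intro a b
    change homComp 𝒜 D T (a * b) = a * homComp 𝒜 D T b + b * homComp 𝒜 D T a
    induction a using graded_induction 𝒜 with
    | h0 => simp
    | hadd x y hx hy => rw [add_mul, map_add, map_add, hx, hy]; ring
    | hom i a ha =>
      induction b using graded_induction 𝒜 with
      | h0 => simp
      | hadd x y hx hy => rw [mul_add, map_add, map_add, hx, hy]; ring
      | hom j b hb =>
        rw [homComp_of_mem 𝒜 D T (SetLike.mul_mem_graded ha hb), homComp_of_mem 𝒜 D T ha,
          homComp_of_mem 𝒜 D T hb, Derivation.leibniz, DirectSum.decompose_add,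
          DirectSum.add_apply, AddSubgroup.coe_add, smul_eq_mul, smul_eq_mul, add_assoc i j T,
          DirectSum.coe_decompose_mul_add_of_left_mem 𝒜 ha, show i + (j + T) = j + (i + T) by ring,
          DirectSum.coe_decompose_mul_add_of_left_mem 𝒜 hb])

theorem homDer_of_mem (D : Derivation ℤ B B) (T : ℤ) {i : ℤ} {x : B} (hx : x ∈ 𝒜 i) :
    homDer 𝒜 D T x = (decompose 𝒜 (D x) (i + T) : B) :=
  homComp_of_mem 𝒜 D T hx

theorem eventually_decompose_zero (y : B) : ∀ᶠ n : ℤ in Filter.atTop, (decompose 𝒜 y n : B) = 0 := by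
  induction y using graded_induction 𝒜 with
  | h0 => simp
  | hom i y hy =>
    filter_upwards [Filter.eventually_gt_atTop i] with n hn
    exact DirectSum.decompose_of_mem_ne 𝒜 hy hn.ne
  | hadd x y hx hy =>
    filter_upwards [hx, hy] with n h1 h2
    rw [DirectSum.decompose_add, DirectSum.add_apply, AddSubgroup.coe_add, h1, h2, add_zero]

theorem eventually_homDer_zero (D : Derivation ℤ B B) (y : B) :
    ∀ᶠ n : ℤ in Filter.atTop, homDer 𝒜 D n y = 0 := by
  induction y using graded_induction 𝒜 with
  | h0 => simp
  | hom i y hy =>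
    have h := (Filter.tendsto_atTop_add_const_left Filter.atTop i Filter.tendsto_id).eventually
      (eventually_decompose_zero 𝒜 (D y))
    filter_upwards [h] with n hn
    rw [homDer_of_mem 𝒜 D n hy]
    exact hn
  | hadd x y hx hy =>
    filter_upwards [hx, hy] with n h1 h2
    rw [map_add, h1, h2, add_zero]

open Classical in
theorem decompose_der (D : Derivation ℤ B B) (y : B) (j : ℤ) :
    (decompose 𝒜 (D y) j : B) =
      ∑ l ∈ (decompose 𝒜 y).support, homDer 𝒜 D (j - l) (decompose 𝒜 y l : B) := by
  conv_lhs => rw [← DirectSum.sum_support_decompose 𝒜 y]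
  rw [map_sum, DirectSum.decompose_sum, DFinsupp.finsetSum_apply, AddSubgroup.val_finsetSum]
  refine Finset.sum_congr rfl fun l _ => ?_
  rw [homDer_of_mem 𝒜 D (j - l) (Subtype.mem _), show l + (j - l) = j by ring]

/-- Existence of a nonzero homogeneous locally nilpotent derivation. -/
theorem exists_homog_lnd {k : Type*} [Field k] [Algebra k B] [Algebra.FiniteType k B]
    [IsDomain B] [CharZero B] {D : Derivation ℤ B B} (hD : IsLND D) (hD0 : D ≠ 0) :
    ∃ (E : Derivation ℤ B B) (δ : ℤ), IsLND E ∧ E ≠ 0 ∧ ∀ i, ∀ x ∈ 𝒜 i, E x ∈ 𝒜 (i + δ) := by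
  classical
  obtain ⟨S, hS⟩ := ‹Algebra.FiniteType k B›.out
  have hk : ∀ (T : ℤ) (c : k), homDer 𝒜 D T (algebraMap k B c) = 0 := by
    intro T c
    rw [homDer_of_mem 𝒜 D T (algebraMap_mem_zero 𝒜 c)]
    have : D (algebraMap k B c) = 0 := by
      by_cases hc : c = 0
      · simp [hc]
      · exact hD.unit ((IsUnit.mk0 c hc).map _)
    rw [this]
    simp
  have hbdd : ∃ b : ℤ, ∀ z, homDer 𝒜 D z ≠ 0 → z ≤ b := by
    have h1 : ∀ᶠ n : ℤ in Filter.atTop, ∀ s ∈ S, homDer 𝒜 D n s = 0 :=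
      (Filter.eventually_all_finset S).2 fun s _ => eventually_homDer_zero 𝒜 D s
    obtain ⟨b, hb⟩ := Filter.eventually_atTop.1 h1
    refine ⟨b, fun z hz => ?_⟩
    by_contra hlt
    apply hz
    ext x
    have hx : x ∈ Algebra.adjoin k (S : Set B) := by rw [hS]; trivial
    induction hx using Algebra.adjoin_induction with
    | mem x hx => exact hb z (by omega) x hx
    | algebraMap c => exact hk z c
    | add x y _ _ h1 h2 => rw [map_add, h1, h2]; simp
    | mul x y _ _ h1 h2 => rw [Derivation.leibniz, h1, h2]; simp
  have hinh : ∃ z : ℤ, homDer 𝒜 D z ≠ 0 := by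
    by_contra! hcon
    apply hD0
    ext x
    have : ∀ j, (decompose 𝒜 (D x) j : B) = 0 := by
      intro j
      rw [decompose_der]
      refine Finset.sum_eq_zero fun l _ => ?_
      rw [hcon]
      rfl
    rw [← DirectSum.sum_support_decompose 𝒜 (D x)]
    exact Finset.sum_eq_zero fun j _ => this j
  obtain ⟨T, hT0, hT⟩ := Int.exists_greatest_of_bdd hbdd hinh
  have hTz : ∀ j > T, homDer 𝒜 D j = 0 := by
    intro j hj
    by_contra h
    exact absurd (hT j h) (by omega)
  have hstep : ∀ (y : B) (m : ℤ), (∀ j > m, (decompose 𝒜 y j : B) = 0) →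
      (decompose 𝒜 (D y) (m + T) : B) = homDer 𝒜 D T (decompose 𝒜 y m : B) ∧
      ∀ j > m + T, (decompose 𝒜 (D y) j : B) = 0 := by
    intro y m hm
    constructor
    · rw [decompose_der, Finset.sum_eq_single m]
      · rw [show m + T - m = T by ring]
      · intro l _ hl
        rcases lt_or_gt_of_ne hl with h | h
        · rw [hTz _ (by omega)]; rfl
        · rw [hm l h, map_zero]
      · intro h
        rw [DFinsupp.notMem_support_iff.1 h]
        simp
    · intro j hj
      rw [decompose_der]
      refine Finset.sum_eq_zero fun l _ => ?_
      rcases lt_or_ge m l with h | h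
      · rw [hm l h, map_zero]
      · rw [hTz _ (by omega)]; rfl
  have hiter : ∀ (i : ℤ) (x : B), x ∈ 𝒜 i → ∀ n : ℕ,
      (⇑(homDer 𝒜 D T))^[n] x = (decompose 𝒜 ((⇑D)^[n] x) (i + n * T) : B) ∧
      ∀ j > i + n * T, (decompose 𝒜 ((⇑D)^[n] x) j : B) = 0 := by
    intro i x hx n
    induction n with
    | zero =>
      constructor
      · have e : i + ((0 : ℕ) : ℤ) * T = i := by simp
        rw [e]
        exact (DirectSum.decompose_of_mem_same 𝒜 hx).symm
      · intro j hj
        exact DirectSum.decompose_of_mem_ne 𝒜 hx (by simp at hj; omega)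
    | succ n ih =>
      have h := hstep _ _ ih.2
      rw [Function.iterate_succ_apply', Function.iterate_succ_apply', ih.1, ← h.1]
      have e : i + ((n + 1 : ℕ) : ℤ) * T = i + n * T + T := by push_cast; ring
      rw [e]
      exact ⟨rfl, h.2⟩
  refine ⟨homDer 𝒜 D T, T, ?_, hT0, ?_⟩
  · have main : ∀ b : B, ∃ n : ℕ, (⇑(homDer 𝒜 D T))^[n] b = 0 := by
      intro b
      induction b using graded_induction 𝒜 with
      | h0 => exact ⟨0, rfl⟩
      | hom i x hx =>
        obtain ⟨n, _, hn⟩ := hD x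
        refine ⟨n, ?_⟩
        rw [(hiter i x hx n).1, hn]
        simp
      | hadd x y hx hy =>
        obtain ⟨n, hn⟩ := hx
        obtain ⟨n', hn'⟩ := hy
        refine ⟨max n n', ?_⟩
        rw [iterate_map_add, lnd_iter_zero_of_le _ hn (le_max_left _ _),
          lnd_iter_zero_of_le _ hn' (le_max_right _ _), add_zero]
    intro b
    obtain ⟨n, hn⟩ := main b
    exact ⟨n + 1, Nat.succ_pos n, lnd_iter_zero_of_le _ hn (Nat.le_succ n)⟩
  · intro i x hx
    rw [homDer_of_mem 𝒜 D T hx]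
    exact Subtype.mem _

end Homog

section Down

variable {B : Type*} [CommRing B] (𝒜 : ℤ → AddSubgroup B) [GradedRing 𝒜]

theorem pow_mem_gr {i : ℤ} {x : B} (hx : x ∈ 𝒜 i) (n : ℕ) : x ^ n ∈ 𝒜 (n * i) := by
  have := SetLike.pow_mem_graded n hx
  rwa [nsmul_eq_mul] at this

theorem iter_mem {E : Derivation ℤ B B} {δ : ℤ} (hE : ∀ i, ∀ x ∈ 𝒜 i, E x ∈ 𝒜 (i + δ))
    {i : ℤ} {x : B} (hx : x ∈ 𝒜 i) (n : ℕ) : (⇑E)^[n] x ∈ 𝒜 (i + n * δ) := by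
  induction n with
  | zero => simpa using hx
  | succ n ih =>
    rw [Function.iterate_succ_apply']
    have := hE _ _ ih
    have e : i + ((n + 1 : ℕ) : ℤ) * δ = i + n * δ + δ := by push_cast; ring
    rwa [e]

theorem ker_pow (E : Derivation ℤ B B) {a : B} (ha : E a = 0) (n : ℕ) : E (a ^ n) = 0 := by
  rw [Derivation.leibniz_pow, ha]; simp

theorem ker_mul (E : Derivation ℤ B B) {a b : B} (ha : E a = 0) (hb : E b = 0) :
    E (a * b) = 0 := by
  rw [Derivation.leibniz, ha, hb]; simp

/-- Reduction modulo a local slice. -/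
theorem slice_reduction [IsDomain B] [CharZero B] {E : Derivation ℤ B B} {δ : ℤ}
    (hE : ∀ i, ∀ x ∈ 𝒜 i, E x ∈ 𝒜 (i + δ)) {σ : ℤ} {s : B} (hs : s ∈ 𝒜 σ)
    (hss : E (E s) = 0) (m : ℕ) :
    ∀ (i : ℤ) (b : B), b ∈ 𝒜 i → (⇑E)^[m] b = 0 →
      ∃ (q N : ℕ) (α : B), q ≠ 0 ∧ α ∈ 𝒜 (N * (σ + δ) + i) ∧ E α = 0 ∧
        (q : B) * (E s) ^ N * b - α ∈ Ideal.span {s} := by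
  induction m with
  | zero =>
    intro i b hb h
    have : b = 0 := h
    subst this
    exact ⟨1, 0, 0, one_ne_zero, zero_mem _, map_zero _, by simp⟩
  | succ m ih =>
    intro i b hb h
    rcases Nat.eq_zero_or_pos m with rfl | hm
    · refine ⟨1, 0, b, one_ne_zero, by simpa using hb, h, by simp⟩
    have hEm : E ((⇑E)^[m] b) = 0 := by rwa [Function.iterate_succ_apply'] at h
    set a := E s with ha
    have ham : a ∈ 𝒜 (σ + δ) := hE _ _ hs
    have hf : E (m.factorial : B) = 0 := Derivation.map_natCast E _
    have hc : E ((m.factorial : B) * a ^ m) = 0 := ker_mul E hf (ker_pow E hss m)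
    let b' := (m.factorial : B) * a ^ m * b - (⇑E)^[m] b * s ^ m
    have hfac0 : (m.factorial : B) ∈ 𝒜 0 := by
      have := nsmul_mem (SetLike.GradedOne.one_mem (A := 𝒜)) m.factorial
      simpa using this
    have hb'm : b' ∈ 𝒜 (m * (σ + δ) + i) := by
      apply sub_mem
      · have := SetLike.mul_mem_graded (SetLike.mul_mem_graded hfac0 (pow_mem_gr 𝒜 ham m)) hb
        rwa [zero_add] at this
      · have := SetLike.mul_mem_graded (iter_mem 𝒜 hE hb m) (pow_mem_gr 𝒜 hs m)
        have e : i + m * δ + m * σ = m * (σ + δ) + i := by ring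
        rwa [e] at this
    have hb'0 : (⇑E)^[m] b' = 0 := by
      simp only [b']
      rw [iterate_map_sub, lnd_iter_const_mul E hc, lnd_iter_const_mul E hEm,
        lnd_iter_slice_pow E hss]
      ring
    obtain ⟨q, N, α, hq, hα, hα0, hmem⟩ := ih _ _ hb'm hb'0
    refine ⟨q * m.factorial, N + m, α, mul_ne_zero hq m.factorial_ne_zero, ?_, hα0, ?_⟩
    · have e : ((N + m : ℕ) : ℤ) * (σ + δ) + i = N * (σ + δ) + (m * (σ + δ) + i) := by
        push_cast; ring
      rwa [e]
    · have h2 : (q : B) * a ^ N * ((⇑E)^[m] b * s ^ m) ∈ Ideal.span {s} := by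
        rw [Ideal.mem_span_singleton]
        exact Dvd.dvd.mul_left (Dvd.dvd.mul_left (dvd_pow_self s hm.ne') _) _
      have h3 := Ideal.add_mem _ hmem h2
      convert h3 using 1
      simp only [b']
      push_cast
      ring

/-- The degrees of nonzero homogeneous kernel elements are closed under subtraction-pairs. -/
theorem closure_kerDeg [IsDomain B] (E : Derivation ℤ B B) {x : ℤ}
    (hx : x ∈ AddSubgroup.closure {i : ℤ | ∃ f ∈ 𝒜 i, f ≠ 0 ∧ E f = 0}) :
    ∃ (j l : ℤ) (f g : B), f ∈ 𝒜 j ∧ g ∈ 𝒜 l ∧ f ≠ 0 ∧ g ≠ 0 ∧ E f = 0 ∧ E g = 0 ∧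
      x = j - l := by
  have h1 : (1 : B) ∈ 𝒜 0 := SetLike.GradedOne.one_mem
  induction hx using AddSubgroup.closure_induction with
  | mem x hx =>
    obtain ⟨f, hf, hf0, hEf⟩ := hx
    exact ⟨x, 0, f, 1, hf, h1, hf0, one_ne_zero, hEf, by simp, by simp⟩
  | zero => exact ⟨0, 0, 1, 1, h1, h1, one_ne_zero, one_ne_zero, by simp, by simp, by simp⟩
  | add x y _ _ hx hy =>
    obtain ⟨j, l, f, g, a1, a2, a3, a4, a5, a6, a7⟩ := hx
    obtain ⟨j', l', f', g', b1, b2, b3, b4, b5, b6, b7⟩ := hy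
    exact ⟨j + j', l + l', f * f', g * g', SetLike.mul_mem_graded a1 b1,
      SetLike.mul_mem_graded a2 b2, mul_ne_zero a3 b3, mul_ne_zero a4 b4,
      ker_mul E a5 b5, ker_mul E a6 b6, by rw [a7, b7]; ring⟩
  | neg x _ hx =>
    obtain ⟨j, l, f, g, a1, a2, a3, a4, a5, a6, a7⟩ := hx
    exact ⟨l, j, g, f, a2, a1, a4, a3, a6, a5, by rw [a7]; ring⟩

theorem exists_homog_ne {E : Derivation ℤ B B} (hE0 : E ≠ 0) : ∃ i, ∃ x ∈ 𝒜 i, E x ≠ 0 := by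
  by_contra! hcon
  apply hE0
  ext x
  induction x using graded_induction 𝒜 with
  | h0 => simp
  | hom i x hx => exact hcon i x hx
  | hadd x y hx hy => rw [map_add, hx, hy]; simp

theorem exists_ker_factor [IsDomain B] [CharZero B] [IsNoetherianRing B]
    (hunit : ∀ n : ℕ, n ≠ 0 → IsUnit (n : B))
    (hsat : ∀ p ∈ homogHt1 𝒜, Gsub 𝒜 ≤ Mbar 𝒜 p)
    {E : Derivation ℤ B B} (hL : IsLND E) (hE0 : E ≠ 0) {δ : ℤ}
    (hE : ∀ i, ∀ x ∈ 𝒜 i, E x ∈ 𝒜 (i + δ)) {n : ℕ} (hn : 1 ≤ n) :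
    ∃ (F : B) (r : ℤ), F ≠ 0 ∧ E F = 0 ∧ F ∈ 𝒜 r ∧ (n : ℤ) ∣ r + δ := by
  obtain ⟨i₀, x, hx, hEx⟩ := exists_homog_ne 𝒜 hE0
  have hslice : ∃ m : ℕ, E ((⇑E)^[m] x) ≠ 0 ∧ E (E ((⇑E)^[m] x)) = 0 := by
    classical
    obtain ⟨M, _, hM⟩ := hL x
    have hex : ∃ M, (⇑E)^[M] x = 0 := ⟨M, hM⟩
    have hfs := Nat.find_spec hex
    have h2 : 2 ≤ Nat.find hex := by
      by_contra hlt
      apply hEx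
      exact lnd_iter_zero_of_le E (n := 1) hfs (by omega)
    obtain ⟨m, hm⟩ := Nat.exists_eq_add_of_le h2
    refine ⟨m, ?_, ?_⟩
    · have := Nat.find_min hex (m := m + 1) (by omega)
      rwa [Function.iterate_succ_apply'] at this
    · rw [hm, add_comm, Function.iterate_succ_apply', Function.iterate_succ_apply'] at hfs
      exact hfs
  obtain ⟨m, hs1, hs2⟩ := hslice
  have hsm := iter_mem 𝒜 hE hx m
  set s := (⇑E)^[m] x
  set σ := i₀ + m * δ
  have hs0 : s ≠ 0 := by
    intro h
    rw [h, map_zero] at hs1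
    exact hs1 rfl
  have ham : E s ∈ 𝒜 (σ + δ) := hE _ _ hsm
  have hrad : E s ∉ (Ideal.span {s}).radical := by
    rintro ⟨N, hN⟩
    obtain ⟨c, hc⟩ := Ideal.mem_span_singleton.1 hN
    apply hs1
    apply hL.factClosed (x := s) (y := c)
    · rw [← hc]; exact pow_ne_zero _ hs1
    · rw [← hc]; exact ker_pow E hs2 N
  rw [← Ideal.sInf_minimalPrimes, Submodule.mem_sInf] at hrad
  push Not at hrad
  obtain ⟨p, hp, hap⟩ := hrad
  have hsp : s ∈ p := hp.1.2 (Ideal.mem_span_singleton_self s)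
  have hpp : Ideal.IsPrime p := hp.1.1
  have hp1 : p ∈ homogHt1 𝒜 :=
    homogHt1_of_heightOne 𝒜 (heightOne_of_minimalPrimes hs0 hp) hs0 hsp hsm
  let S : Set ℤ := {i : ℤ | ∃ f ∈ 𝒜 i, f ≠ 0 ∧ E f = 0}
  have haS : σ + δ ∈ S := ⟨E s, ham, hs1, hs2⟩
  have hMS : Mbar 𝒜 p ≤ AddSubgroup.closure S := by
    apply (AddSubgroup.closure_le _).2
    intro i hi
    obtain ⟨b, hb, hbp⟩ := Set.not_subset.1 hi
    obtain ⟨M, _, hM⟩ := hL b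
    obtain ⟨q, N, α, hq, hα, hα0, hmem⟩ := slice_reduction 𝒜 hE hsm hs2 M i b hb hM
    have hαp : α ≠ 0 := by
      rintro rfl
      rw [sub_zero] at hmem
      have hmem' := hp.1.2 hmem
      rcases hpp.mem_or_mem hmem' with h | h
      · rcases hpp.mem_or_mem h with h | h
        · exact hpp.ne_top (Ideal.eq_top_of_isUnit_mem _ h (hunit q hq))
        · exact hap (hpp.mem_of_pow_mem _ h)
      · exact hbp h
    have h1 : (N * (σ + δ) + i) ∈ AddSubgroup.closure S :=
      AddSubgroup.subset_closure ⟨α, hα, hαp, hα0⟩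
    have h2 : N • (σ + δ) ∈ AddSubgroup.closure S :=
      nsmul_mem (AddSubgroup.subset_closure haS) N
    have h3 := sub_mem h1 h2
    rw [nsmul_eq_mul] at h3
    have e : N * (σ + δ) + i - N * (σ + δ) = i := by ring
    rw [e] at h3
    exact h3
  have hσ : σ ∈ AddSubgroup.closure S := by
    apply hMS
    apply hsat p hp1
    apply AddSubgroup.subset_closure
    intro hbot
    rw [hbot] at hsm
    exact hs0 hsm
  have hδ : -δ ∈ AddSubgroup.closure S := by
    have := sub_mem hσ (AddSubgroup.subset_closure haS)
    have e : σ - (σ + δ) = -δ := by ring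
    rwa [e] at this
  obtain ⟨j, l, f, g, a1, a2, a3, a4, a5, a6, a7⟩ := closure_kerDeg 𝒜 E hδ
  refine ⟨f * g ^ (n - 1), j + ((n - 1 : ℕ) : ℤ) * l, mul_ne_zero a3 (pow_ne_zero _ a4),
    ker_mul E a5 (ker_pow E a6 _), SetLike.mul_mem_graded a1 (pow_mem_gr 𝒜 a2 _), ⟨l, ?_⟩⟩
  push_cast [hn]
  linear_combination -a7

/-- A homogeneous derivation of degree divisible by `n` restricts to the Veronese subring. -/
theorem restrict_lnd [IsDomain B] [CharZero B] {E : Derivation ℤ B B} (hL : IsLND E)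
    (hE0 : E ≠ 0) {δ : ℤ} (hE : ∀ i, ∀ x ∈ 𝒜 i, E x ∈ 𝒜 (i + δ)) {n : ℕ} (hn : 1 ≤ n)
    (hδ : (n : ℤ) ∣ δ) :
    ∃ D : Derivation ℤ (verZ 𝒜 n) (verZ 𝒜 n), IsLND D ∧ D ≠ 0 := by
  have hst : ∀ x ∈ verZ 𝒜 n, E x ∈ verZ 𝒜 n := by
    intro x hx
    refine verZ_induction 𝒜 (motive := fun x => E x ∈ verZ 𝒜 n) x hx ?_ ?_ ?_ ?_
    · intro i hi x hx
      exact mem_verZ_of_mem 𝒜 (dvd_add hi hδ) (hE i x hx)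
    · intro x y h1 h2
      rw [map_add]
      exact add_mem h1 h2
    · intro x h
      rw [map_neg]
      exact neg_mem h
    · intro x hx y hy h1 h2
      rw [Derivation.leibniz]
      exact add_mem (mul_mem hx h2) (mul_mem hy h1)
  let D : Derivation ℤ (verZ 𝒜 n) (verZ 𝒜 n) := Derivation.mk'
    (AddMonoidHom.toIntLinearMap
      { toFun := fun x => ⟨E x, hst x x.2⟩
        map_zero' := by ext; simp
        map_add' := by intro x y; ext; simp }) (by
      intro a b
      ext
      change E (a * b) = a * E b + b * E a
      rw [Derivation.leibniz]; rfl)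
  have hD : ∀ x, ((D x : verZ 𝒜 n) : B) = E x := fun x => rfl
  have hDi : ∀ (m : ℕ) x, (((⇑D)^[m] x : verZ 𝒜 n) : B) = (⇑E)^[m] x := by
    intro m x
    induction m with
    | zero => rfl
    | succ m ih => rw [Function.iterate_succ_apply', Function.iterate_succ_apply', hD, ih]
  refine ⟨D, ?_, ?_⟩
  · intro b
    obtain ⟨m, hm, h⟩ := hL b
    refine ⟨m, hm, ?_⟩
    ext
    rw [hDi, h]; rfl
  · intro h0
    obtain ⟨i, x, hx, hEx⟩ := exists_homog_ne 𝒜 hE0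
    have hxn : x ^ n ∈ verZ 𝒜 n := by
      apply mem_verZ_of_mem 𝒜 (i := n * i) (Dvd.intro _ rfl) (pow_mem_gr 𝒜 hx n)
    have h := hD ⟨x ^ n, hxn⟩
    rw [h0] at h
    have h' : E (x ^ n) = 0 := h.symm
    rw [Derivation.leibniz_pow, nsmul_eq_mul, smul_eq_mul] at h'
    have hx0 : x ≠ 0 := by
      rintro rfl
      simp at hEx
    have hn0 : (n : B) ≠ 0 := by exact_mod_cast (by omega : n ≠ 0)
    rcases mul_eq_zero.1 h' with h | h
    · exact hn0 h
    · rcases mul_eq_zero.1 h with h | h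
      · exact pow_ne_zero _ hx0 h
      · exact hEx h

theorem smul_isLND {E : Derivation ℤ B B} (hL : IsLND E) {F : B} (hF : E F = 0) :
    IsLND (F • E) := by
  have key : ∀ (m : ℕ) x, (⇑(F • E))^[m] x = F ^ m * (⇑E)^[m] x := by
    intro m x
    induction m with
    | zero => simp
    | succ m ih =>
      rw [Function.iterate_succ_apply', Function.iterate_succ_apply', ih, Derivation.smul_apply,
        Derivation.leibniz, ker_pow E hF]
      simp only [smul_eq_mul]
      ring
  intro b
  obtain ⟨m, hm, h⟩ := hL b
  exact ⟨m, hm, by rw [key, h, mul_zero]⟩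

end Down

theorem groupGen_inj {H K : AddSubgroup ℤ} (h : groupGen H = groupGen K) : H = K := by
  have h1 : Associated (Submodule.IsPrincipal.generator (AddSubgroup.toIntSubmodule H : Ideal ℤ))
      (Submodule.IsPrincipal.generator (AddSubgroup.toIntSubmodule K : Ideal ℤ)) :=
    Int.associated_iff_natAbs.2 h
  have h2 := Ideal.span_singleton_eq_span_singleton.2 h1
  rw [Ideal.span_singleton_generator, Ideal.span_singleton_generator] at h2
  exact AddSubgroup.toIntSubmodule.injective h2

theorem sat_le {B : Type*} [CommRing B] (𝒜 : ℤ → AddSubgroup B) (hsat : ebarB 𝒜 = eB 𝒜) :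
    ∀ p ∈ homogHt1 𝒜, Gsub 𝒜 ≤ Mbar 𝒜 p := by
  intro p hp
  unfold ebarB eB at hsat
  rw [if_pos ⟨p, hp⟩] at hsat
  rw [← groupGen_inj hsat]
  exact iInf_le (fun p : homogHt1 𝒜 => Mbar 𝒜 p.1) ⟨p, hp⟩

/-- Let k be a field of characteristic 0 and B a ℤ-graded normal affine k-domain.
If B is saturated in codimension 1 (i.e. ē(B) = e(B)), then NR(B) = ∅ or
NR(B) = { d : d ≥ 1 }; i.e. either every Veronese subring B^{(d)} (d ≥ 1) is rigid,
or every one is non-rigid. -/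
theorem NR_empty_or_all
    {k : Type*} [Field k] [CharZero k]
    {B : Type*} [CommRing B] [IsDomain B] [IsIntegrallyClosed B]
    [Algebra k B] [Algebra.FiniteType k B]
    (𝒜 : ℤ → AddSubgroup B) [GradedRing 𝒜]
    (hsat : ebarB 𝒜 = eB 𝒜) :
    NRset 𝒜 = ∅ ∨ NRset 𝒜 = { d : ℕ | 1 ≤ d } := by
  have hs := sat_le 𝒜 hsat
  have : CharZero B := charZero_of_injective_algebraMap (algebraMap k B).injective
  have : IsNoetherianRing B := Algebra.FiniteType.isNoetherianRing k B
  have hunit : ∀ n : ℕ, n ≠ 0 → IsUnit (n : B) := by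
    intro n hn
    rw [← map_natCast (algebraMap k B)]
    exact (IsUnit.mk0 (n : k) (by exact_mod_cast hn)).map _
  rcases Set.eq_empty_or_nonempty (NRset 𝒜) with h | ⟨d, hd, D, hD, hD0⟩
  · exact Or.inl h
  right
  obtain ⟨D', hD'⟩ := exists_ext_der 𝒜 hunit hs hd D
  have hL' : IsLND D' := ext_isLND 𝒜 hd hD hD'
  have hD'0 : D' ≠ 0 := by
    rintro rfl
    apply hD0
    ext r
    exact (hD' r).symm
  obtain ⟨E, δ, hL, hE0, hE⟩ := exists_homog_lnd 𝒜 (k := k) hL' hD'0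
  ext n
  refine ⟨fun h => h.1, fun hn => ⟨hn, ?_⟩⟩
  obtain ⟨F, r, hF0, hEF, hF, hdvd⟩ := exists_ker_factor 𝒜 hunit hs hL hE0 hE hn
  refine restrict_lnd 𝒜 (E := F • E) (δ := r + δ) (smul_isLND hL hEF) ?_ ?_ hn hdvd
  · intro h
    apply hE0
    ext x
    have := congrArg (fun D : Derivation ℤ B B => D x) h
    simp only [Derivation.smul_apply, smul_eq_mul] at this
    exact (mul_eq_zero.1 this).resolve_left hF0
  · intro i x hx
    have := SetLike.mul_mem_graded hF (hE i x hx)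
    have e : i + (r + δ) = r + (i + δ) := by ring
    rw [e]
    exact this
end
end
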